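/- arXiv:math/0205140 — 3 statements merged into one kernel-verified Lean document; each statement's English description precedes it below -/
import Mathlib

section
/- Let d ≥ 3. Let X₁, X₂, … and Y₁, Y₂, … be two sequences of random points, all independent and uniformly distributed in the unit cube [0,1]^d, and let L_N = L_MBM(X₁,…,X_N; Y₁,…,Y_N) be the length of a minimum Euclidean bipartite matching of the first N points of each sequence. Then there exists a constant β_MBM(d) > 0 such that, with probability one, L_N / N^{1-1/d} → β_MBM(d) as N → ∞. -/
open MeasureTheory ProbabilityTheory Filter

noncomputable section

/-- The unit cube `[0,1]^d` in Euclidean space `ℝ^d`. -/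
def unitCube (d : ℕ) : Set (EuclideanSpace ℝ (Fin d)) :=
  {x | ∀ i, x i ∈ Set.Icc (0 : ℝ) 1}

/-- The uniform probability measure on the unit cube `[0,1]^d`
(the cube has Lebesgue measure one, so the restriction of Lebesgue measure
to the cube is the uniform probability measure on it). -/
def unifCube (d : ℕ) : Measure (EuclideanSpace ℝ (Fin d)) :=
  volume.restrict (unitCube d)

/-- `LMBMon X Y A B` is the minimum total Euclidean length of a partial bipartite
matching pairing `min A.card B.card` of the points `X j, j ∈ A` with as many of the
points `Y j, j ∈ B`, each pair consisting of one `X`-point and one `Y`-point. -/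
def LMBMon {d N₁ N₂ : ℕ} (X : Fin N₁ → EuclideanSpace ℝ (Fin d))
    (Y : Fin N₂ → EuclideanSpace ℝ (Fin d)) (A : Finset (Fin N₁)) (B : Finset (Fin N₂)) : ℝ :=
  sInf { s | ∃ (σ : Fin (min A.card B.card) ↪ Fin N₁) (τ : Fin (min A.card B.card) ↪ Fin N₂),
    (∀ i, σ i ∈ A) ∧ (∀ i, τ i ∈ B) ∧ s = ∑ i, dist (X (σ i)) (Y (τ i)) }

/-- `LMBM X Y` : the minimum total Euclidean length of a bipartite matching between the
points of `X` and the points of `Y`; if the two families have different cardinalities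
`N₁ ≠ N₂`, it is the minimum length of a partial matching pairing `min N₁ N₂` points of
each family, leaving `|N₁ - N₂|` points unmatched. -/
def LMBM {d N₁ N₂ : ℕ} (X : Fin N₁ → EuclideanSpace ℝ (Fin d))
    (Y : Fin N₂ → EuclideanSpace ℝ (Fin d)) : ℝ :=
  LMBMon X Y Finset.univ Finset.univ

/-- `MP d lam`: the expected length of a minimum bipartite matching in the Poissonized
model on `[0,1]^d` with intensity `lam`: the numbers `n₁, n₂` of points of the two
families are independent Poisson(lam) variables and the points are i.i.d. uniform
on the cube. -/
def MP (d : ℕ) (lam : ℝ) : ℝ :=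
  ∑' n₁ : ℕ, ∑' n₂ : ℕ,
    (Real.exp (-lam) * lam ^ n₁ / n₁.factorial) *
      ((Real.exp (-lam) * lam ^ n₂ / n₂.factorial) *
        ∫ p : (Fin n₁ → EuclideanSpace ℝ (Fin d)) × (Fin n₂ → EuclideanSpace ℝ (Fin d)),
          LMBM p.1 p.2 ∂ ((Measure.pi fun _ => unifCube d).prod (Measure.pi fun _ => unifCube d)))

end
/-- minimum cost of a perfect matching -/
noncomputable def Lc {S ι : Type*} [Fintype ι] (c : S → S → ℝ) (x y : ι → S) : ℝ :=
  ⨅ σ : Equiv.Perm ι, ∑ i, c (x i) (y (σ i))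

section Lc
variable {S ι κ : Type*} [Fintype ι] [Fintype κ] {c : S → S → ℝ}

lemma Lc_le (x y : ι → S) (σ : Equiv.Perm ι) : Lc c x y ≤ ∑ i, c (x i) (y (σ i)) :=
  ciInf_le (Set.finite_range _).bddBelow σ

lemma exists_Lc (c : S → S → ℝ) (x y : ι → S) : ∃ σ : Equiv.Perm ι, ∑ i, c (x i) (y (σ i)) = Lc c x y :=
  exists_eq_ciInf_of_finite

lemma le_Lc (x y : ι → S) (b : ℝ) (h : ∀ σ : Equiv.Perm ι, b ≤ ∑ i, c (x i) (y (σ i))) :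
    b ≤ Lc c x y := le_ciInf h

lemma Lc_nonneg (hc : ∀ u v, 0 ≤ c u v) (x y : ι → S) : 0 ≤ Lc c x y :=
  le_Lc _ _ _ fun _ => Finset.sum_nonneg fun _ _ => hc _ _

lemma Lc_le_card {D : ℝ} (hD : ∀ u v, c u v ≤ D) (x y : ι → S) :
    Lc c x y ≤ D * Fintype.card ι := by
  refine (Lc_le x y 1).trans ((Finset.sum_le_sum fun i _ => hD _ _).trans ?_)
  simp [mul_comm]

lemma Lc_equiv_le (e e' : κ ≃ ι) (x y : ι → S) : Lc c (x ∘ e) (y ∘ e') ≤ Lc c x y := by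
  obtain ⟨σ, hσ⟩ := exists_Lc c x y
  rw [← hσ]
  refine (Lc_le _ _ ((e.trans σ).trans e'.symm)).trans ?_
  simp only [Function.comp, Equiv.trans_apply, Equiv.apply_symm_apply]
  rw [Equiv.sum_comp e (fun i => c (x i) (y (σ i)))]

lemma Lc_equiv (e e' : κ ≃ ι) (x y : ι → S) : Lc c (x ∘ e) (y ∘ e') = Lc c x y := by
  refine le_antisymm (Lc_equiv_le e e' x y) ?_
  have := Lc_equiv_le (c := c) e.symm e'.symm (x ∘ e) (y ∘ e')
  simpa [Function.comp_assoc] using this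

lemma Lc_prod_le (x y : κ × ι → S) :
    Lc c x y ≤ ∑ k, Lc c (fun i => x (k, i)) (fun i => y (k, i)) := by
  choose σ hσ using fun k => exists_Lc c (fun i => x (k, i)) (fun i => y (k, i))
  refine (Lc_le _ _ (Equiv.prodCongrRight σ)).trans (le_of_eq ?_)
  rw [Fintype.sum_prod_type]
  exact Finset.sum_congr rfl fun k _ => hσ k

lemma Lc_sum_le (x y : κ ⊕ ι → S) :
    Lc c x y ≤ Lc c (x ∘ Sum.inl) (y ∘ Sum.inl) + Lc c (x ∘ Sum.inr) (y ∘ Sum.inr) := by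
  obtain ⟨σ, hσ⟩ := exists_Lc c (x ∘ Sum.inl) (y ∘ Sum.inl)
  obtain ⟨τ, hτ⟩ := exists_Lc c (x ∘ Sum.inr) (y ∘ Sum.inr)
  refine (Lc_le _ _ (Equiv.sumCongr σ τ)).trans (le_of_eq ?_)
  rw [Fintype.sum_sum_type, ← hσ, ← hτ]
  rfl

open Classical in
lemma Lc_diff {D : ℝ} (h0 : ∀ u v, 0 ≤ c u v) (hD : ∀ u v, c u v ≤ D) (x y x' y' : ι → S) :
    Lc c x y ≤ Lc c x' y' + D * ((Finset.univ.filter fun i => x i ≠ x' i).card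
      + (Finset.univ.filter fun i => y i ≠ y' i).card) := by
  obtain ⟨σ, hσ⟩ := exists_Lc c x' y'
  refine (Lc_le _ _ σ).trans ?_
  rw [← hσ]
  have key : ∀ i, c (x i) (y (σ i)) ≤ c (x' i) (y' (σ i)) +
      D * ((if x i ≠ x' i then 1 else 0) + (if y (σ i) ≠ y' (σ i) then 1 else 0)) := by
    intro i
    have hD0 : 0 ≤ D := (h0 (x i) (x i)).trans (hD _ _)
    have h1 := h0 (x' i) (y' (σ i))
    have h2 := hD (x i) (y (σ i))
    split_ifs with hx hy hy
    · linarith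
    · linarith
    · linarith
    · rw [not_not] at hx hy
      rw [hx, hy]; linarith
  refine (Finset.sum_le_sum fun i _ => key i).trans (le_of_eq ?_)
  rw [Finset.sum_add_distrib, ← Finset.mul_sum, Finset.sum_add_distrib,
    Equiv.sum_comp σ (fun i => if y i ≠ y' i then (1:ℝ) else 0)]
  simp [Finset.sum_ite]

lemma Lc_scale {r : ℝ} {f : S → S} (hf : ∀ u v, c (f u) (f v) ≤ r * c u v) (x y : ι → S) :
    Lc c (f ∘ x) (f ∘ y) ≤ r * Lc c x y := by
  obtain ⟨σ, hσ⟩ := exists_Lc c x y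
  refine (Lc_le _ _ σ).trans ?_
  rw [← hσ, Finset.mul_sum]
  exact Finset.sum_le_sum fun i _ => hf _ _

lemma measurable_Lc [MeasurableSpace S] (hc : Measurable fun p : S × S => c p.1 p.2)
    {α : Type*} [MeasurableSpace α] {x y : α → ι → S} (hx : Measurable x) (hy : Measurable y) :
    Measurable fun a => Lc c (x a) (y a) := by
  refine Measurable.iInf fun σ => Finset.measurable_sum _ fun i _ => ?_
  exact hc.comp ((measurable_pi_apply i |>.comp hx).prodMk (measurable_pi_apply (σ i) |>.comp hy))

end Lc

lemma LMBM_eq_Lc {d N : ℕ} (X Y : Fin N → EuclideanSpace ℝ (Fin d)) :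
    LMBM X Y = Lc dist X Y := by
  unfold LMBM LMBMon
  have hm : min (Finset.univ : Finset (Fin N)).card (Finset.univ : Finset (Fin N)).card = N := by simp
  generalize min (Finset.univ : Finset (Fin N)).card (Finset.univ : Finset (Fin N)).card = M at hm
  subst hm
  apply le_antisymm
  · obtain ⟨σ, hσ⟩ := exists_Lc dist X Y
    refine csInf_le ⟨0, ?_⟩ ⟨Function.Embedding.refl _, σ.toEmbedding, by simp, by simp, ?_⟩
    · rintro s ⟨σ, τ, -, -, rfl⟩
      exact Finset.sum_nonneg fun _ _ => dist_nonneg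
    · rw [← hσ]; rfl
  · refine le_csInf ⟨_, Function.Embedding.refl _, Function.Embedding.refl _, by simp, by simp, rfl⟩ ?_
    rintro s ⟨σ, τ, -, -, rfl⟩
    let e := Equiv.ofBijective σ (Finite.injective_iff_bijective.1 σ.injective)
    let f := Equiv.ofBijective τ (Finite.injective_iff_bijective.1 τ.injective)
    refine (Lc_le _ _ (e.symm.trans f)).trans (le_of_eq ?_)
    rw [← Equiv.sum_comp e]
    simp [e, f]

lemma integrable_of_bdd {α : Type*} [MeasurableSpace α] {P : Measure α} [IsFiniteMeasure P]
    {f : α → ℝ} (hf : Measurable f) {B : ℝ} (hB : ∀ x, |f x| ≤ B) : Integrable f P :=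
  Integrable.of_bound hf.aestronglyMeasurable B (Eventually.of_forall hB)

lemma integrable_exp_of_bdd {α : Type*} [MeasurableSpace α] {P : Measure α} [IsFiniteMeasure P]
    {f : α → ℝ} (hf : Measurable f) {B : ℝ} (hB : ∀ x, |f x| ≤ B) :
    Integrable (fun x => Real.exp (f x)) P := by
  refine integrable_of_bdd (B := Real.exp B) (Real.measurable_exp.comp hf) fun x => ?_
  rw [Real.abs_exp]
  exact Real.exp_le_exp.2 ((le_abs_self _).trans (hB x))

lemma mcdiarmid {S : Type*} [MeasurableSpace S] (μ : Measure S) [IsProbabilityMeasure μ]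
    (D : NNReal) (n : ℕ) : ∀ (f : (Fin n → S) → ℝ), Measurable f → (∃ B : ℝ, ∀ x, |f x| ≤ B) →
    (∀ x i s, |f x - f (Function.update x i s)| ≤ D) →
    HasSubgaussianMGF (fun x => f x - ∫ y, f y ∂(Measure.pi fun _ => μ)) (n * D ^ 2)
      (Measure.pi fun _ => μ) := by
  induction n with
  | zero =>
    intro f hf _ _
    have : (fun x => f x - ∫ y, f y ∂(Measure.pi fun _ : Fin 0 => μ)) = fun _ => 0 := by
      funext x
      have : ∀ y, f y = f x := fun y => by rw [Subsingleton.elim y x]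
      simp [this]
    rw [this]
    simp
  | succ n ih =>
    rintro f hf ⟨B, hB⟩ hd
    obtain ⟨s0⟩ : Nonempty S := nonempty_of_isProbabilityMeasure μ
    set e := MeasurableEquiv.piFinSuccAbove (fun _ : Fin (n+1) => S) 0 with he
    have hmp := (measurePreserving_piFinSuccAbove (fun _ : Fin (n+1) => μ) 0).symm
    rw [← he] at hmp
    set P := Measure.pi (fun _ : Fin n => μ)
    set F : S × (Fin n → S) → ℝ := fun p => f (e.symm p) with hF
    have hFm : Measurable F := hf.comp e.symm.measurable
    have hFB : ∀ p, |F p| ≤ B := fun p => hB _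
    have hFe : ∀ s x, F (s, x) = f (Fin.cons s x) := by
      intro s x
      simp [F, e, MeasurableEquiv.piFinSuccAbove_symm_apply, Fin.insertNthEquiv]
    set g : (Fin n → S) → ℝ := fun x => ∫ s, F (s, x) ∂μ with hg
    have hgm : Measurable g := by
      have : StronglyMeasurable (fun p : (Fin n → S) × S => F (p.2, p.1)) :=
        (hFm.comp measurable_swap).stronglyMeasurable
      exact this.integral_prod_right'.measurable
    have hint : ∀ x, Integrable (fun s => F (s, x)) μ := fun x =>
      integrable_of_bdd (hFm.comp (measurable_id.prodMk measurable_const)) (fun s => hFB (s, x))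
    have hgB : ∀ x, |g x| ≤ B := by
      intro x
      have := norm_integral_le_of_norm_le_const (μ := μ) (f := fun s => F (s, x)) (C := B)
        (Eventually.of_forall fun s => hFB (s, x))
      simpa using this
    have hgd : ∀ x i s, |g x - g (Function.update x i s)| ≤ D := by
      intro x i s
      simp only [hg]
      rw [← integral_sub (hint _) (hint _)]
      have := norm_integral_le_of_norm_le_const (μ := μ)
        (f := fun u => F (u, x) - F (u, Function.update x i s)) (C := D)
        (Eventually.of_forall fun u => by
          rw [hFe, hFe, Fin.cons_update]
          exact hd _ _ _)
      simpa using this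
    have IH := ih g hgm ⟨B, hgB⟩ hgd
    have hEf : ∫ y, f y ∂(Measure.pi fun _ => μ) = ∫ x, g x ∂P := by
      rw [← hmp.integral_comp' f]
      exact integral_prod_symm _ (integrable_of_bdd hFm hFB)
    rw [hEf]
    set m := ∫ x, g x ∂P with hm
    have hfmB : ∀ t x, |t * (f x - m)| ≤ |t| * (B + |m|) := by
      intro t x
      rw [abs_mul]
      gcongr
      exact (abs_sub _ _).trans (by gcongr; exact hB _)
    refine ⟨fun t => integrable_exp_of_bdd ((hf.sub_const m).const_mul t) (hfmB t), fun t => ?_⟩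
    unfold mgf
    rw [← hmp.integral_comp' (fun x => Real.exp (t * (f x - m)))]
    change ∫ p, Real.exp (t * (F p - m)) ∂(μ.prod P) ≤ _
    rw [integral_prod_symm]
    swap
    · exact integrable_exp_of_bdd ((hFm.sub_const m).const_mul t) (fun p => hfmB t _)
    have hin : ∀ x, ∫ s, Real.exp (t * (F (s, x) - m)) ∂μ ≤
        Real.exp (t * (g x - m)) * Real.exp (D ^ 2 * t ^ 2 / 2) := by
      intro x
      have h1 : ∀ s, Real.exp (t * (F (s, x) - m)) =
          Real.exp (t * (g x - m)) * Real.exp (t * (F (s, x) - g x)) := by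
        intro s; rw [← Real.exp_add]; ring_nf
      simp_rw [h1]
      rw [integral_const_mul]
      gcongr
      have h2 := hasSubgaussianMGF_of_mem_Icc (μ := μ) (X := fun s => F (s, x))
        (a := F (s0, x) - D) (b := F (s0, x) + D)
        (hFm.comp (measurable_id.prodMk measurable_const)).aemeasurable
        (Eventually.of_forall fun s => by
          have := hd (Fin.cons s0 x) 0 s
          rw [Fin.update_cons_zero, ← hFe, ← hFe] at this
          rw [abs_le] at this
          constructor <;> linarith [this.1, this.2])
      have h3 := h2.mgf_le t
      unfold mgf at h3
      refine h3.trans (le_of_eq ?_)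
      congr 3
      have : (F (s0, x) + D - (F (s0, x) - D) : ℝ) = 2 * D := by ring
      rw [this]
      simp
    have hlhs : Integrable (fun x => Real.exp (t * (g x - m)) * Real.exp (D ^ 2 * t ^ 2 / 2)) P := by
      refine (IH.integrable_exp_mul t).mul_const _
    calc ∫ x, ∫ s, Real.exp (t * (F (s, x) - m)) ∂μ ∂P
        ≤ ∫ x, Real.exp (t * (g x - m)) * Real.exp (D ^ 2 * t ^ 2 / 2) ∂P := by
          refine integral_mono_of_nonneg (Eventually.of_forall fun x => ?_) hlhs
            (Eventually.of_forall hin)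
          exact integral_nonneg fun s => (Real.exp_pos _).le
      _ = (∫ x, Real.exp (t * (g x - m)) ∂P) * Real.exp (D ^ 2 * t ^ 2 / 2) := by
          rw [integral_mul_const]
      _ ≤ Real.exp (((n * D ^ 2 : NNReal) : ℝ) * t ^ 2 / 2) * Real.exp (D ^ 2 * t ^ 2 / 2) := by
          gcongr
          exact IH.mgf_le t
      _ = _ := by
          rw [← Real.exp_add]
          congr 1
          push_cast
          ring

section iid
variable {S : Type*} [MeasurableSpace S]

lemma iid_map {Ω : Type*} [MeasurableSpace Ω] {P : Measure Ω} [IsProbabilityMeasure P]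
    (μ : Measure S) {ι κ : Type*} [Fintype κ] {W : ι → Ω → S} (hm : ∀ i, Measurable (W i))
    (hi : iIndepFun W P) (hl : ∀ i, P.map (W i) = μ) {e : κ → ι} (he : Function.Injective e) :
    P.map (fun ω k => W (e k) ω) = Measure.pi fun _ => μ := by
  have h := hi.precomp he
  rw [iIndepFun_iff_map_fun_eq_pi_map (fun i => (hm _).aemeasurable)] at h
  rw [h]
  simp [hl]

variable (μ : Measure S) [IsProbabilityMeasure μ]

lemma map_pi_precomp {ι κ : Type*} [Fintype ι] [Fintype κ] {e : κ → ι} (he : Function.Injective e) :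
    MeasurePreserving (fun w : ι → S => w ∘ e) (Measure.pi fun _ => μ) (Measure.pi fun _ => μ) := by
  refine ⟨measurable_pi_lambda _ fun i => measurable_pi_apply _, ?_⟩
  refine iid_map μ (W := fun i (w : ι → S) => w i) (fun i => measurable_pi_apply i) ?_ ?_ he
  · exact iIndepFun_pi (X := fun _ s => s) (fun i => aemeasurable_id)
  · intro i
    exact (measurePreserving_eval (fun _ => μ) i).map_eq

/-- expected minimum matching cost -/
noncomputable def aN (c : S → S → ℝ) (n : ℕ) : ℝ :=
  ∫ w : Fin n ⊕ Fin n → S, Lc c (w ∘ Sum.inl) (w ∘ Sum.inr) ∂(Measure.pi fun _ => μ)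

variable {c : S → S → ℝ} {D : ℝ}

lemma meas_precomp {ι κ : Type*} (e : κ → ι) : Measurable (fun w : ι → S => w ∘ e) :=
  measurable_pi_lambda _ fun i => measurable_pi_apply _

lemma meas_LcW (hc : Measurable fun p : S × S => c p.1 p.2)
    {ι κ : Type*} [Fintype κ] (e e' : κ → ι) :
    Measurable fun w : ι → S => Lc c (w ∘ e) (w ∘ e') :=
  measurable_Lc hc (meas_precomp e) (meas_precomp e')

lemma abs_Lc_le (h0 : ∀ u v, 0 ≤ c u v) (hD : ∀ u v, c u v ≤ D)
    {κ : Type*} [Fintype κ] (x y : κ → S) : |Lc c x y| ≤ D * Fintype.card κ := by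
  rw [abs_of_nonneg (Lc_nonneg h0 _ _)]
  exact Lc_le_card hD _ _

lemma int_LcW (hc : Measurable fun p : S × S => c p.1 p.2) (h0 : ∀ u v, 0 ≤ c u v) (hD : ∀ u v, c u v ≤ D)
    {ι κ : Type*} [Fintype ι] [Fintype κ] (e e' : κ → ι) :
    Integrable (fun w : ι → S => Lc c (w ∘ e) (w ∘ e')) (Measure.pi fun _ => μ) :=
  integrable_of_bdd (meas_LcW hc e e') fun _ => abs_Lc_le h0 hD _ _

lemma aN_eq (hc : Measurable fun p : S × S => c p.1 p.2)
    {ι : Type*} [Fintype ι] {n : ℕ} (e : Fin n ⊕ Fin n → ι) (he : Function.Injective e) :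
    ∫ w : ι → S, Lc c (w ∘ e ∘ Sum.inl) (w ∘ e ∘ Sum.inr) ∂(Measure.pi fun _ => μ) = aN μ c n := by
  unfold aN
  rw [← (map_pi_precomp μ he).map_eq, integral_map (meas_precomp e).aemeasurable]
  · rfl
  · exact (meas_LcW hc _ _).aestronglyMeasurable

lemma aN_nonneg (h0 : ∀ u v, 0 ≤ c u v)
    (n : ℕ) : 0 ≤ aN μ c n := integral_nonneg fun _ => Lc_nonneg h0 _ _

lemma aN_le (hc : Measurable fun p : S × S => c p.1 p.2) (h0 : ∀ u v, 0 ≤ c u v) (hD : ∀ u v, c u v ≤ D)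
    (n : ℕ) : aN μ c n ≤ D * n := by
  unfold aN
  refine (integral_mono (int_LcW μ hc h0 hD _ _) (integrable_const (D * n)) fun w => ?_).trans ?_
  · simpa using Lc_le_card hD (w ∘ Sum.inl) (w ∘ Sum.inr)
  · simp

lemma aN_add (hc : Measurable fun p : S × S => c p.1 p.2) (h0 : ∀ u v, 0 ≤ c u v) (hD : ∀ u v, c u v ≤ D)
    (n k : ℕ) : aN μ c (n + k) ≤ aN μ c n + aN μ c k := by
  let E : Fin n ⊕ Fin k ≃ Fin (n + k) := finSumFinEquiv
  let e1 : Fin n ⊕ Fin n → Fin (n+k) ⊕ Fin (n+k) := Sum.map (E ∘ Sum.inl) (E ∘ Sum.inl)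
  let e2 : Fin k ⊕ Fin k → Fin (n+k) ⊕ Fin (n+k) := Sum.map (E ∘ Sum.inr) (E ∘ Sum.inr)
  have he1 : Function.Injective e1 := Function.Injective.sumMap
    (E.injective.comp Sum.inl_injective) (E.injective.comp Sum.inl_injective)
  have he2 : Function.Injective e2 := Function.Injective.sumMap
    (E.injective.comp Sum.inr_injective) (E.injective.comp Sum.inr_injective)
  rw [← aN_eq μ hc e1 he1, ← aN_eq μ hc e2 he2, ← integral_add (int_LcW μ hc h0 hD _ _)
    (int_LcW μ hc h0 hD _ _)]
  refine integral_mono (int_LcW μ hc h0 hD _ _) ((int_LcW μ hc h0 hD _ _).add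
    (int_LcW μ hc h0 hD _ _)) fun w => ?_
  simp only []
  rw [← Lc_equiv E E]
  exact Lc_sum_le _ _

/-- concentration -/
lemma conc {Ω : Type*} [MeasurableSpace Ω] {P : Measure Ω} [IsProbabilityMeasure P]
    {X Y : ℕ → Ω → S} (hm : ∀ i, Measurable (Sum.elim X Y i)) (hi : iIndepFun (Sum.elim X Y) P)
    (hl : ∀ i, P.map (Sum.elim X Y i) = μ) (N : ℕ) {ε : ℝ} (hε : 0 ≤ ε)
    (hc : Measurable fun p : S × S => c p.1 p.2) (h0 : ∀ u v, 0 ≤ c u v) (hD : ∀ u v, c u v ≤ D) :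
    P.real {ω | ε ≤ |Lc c (fun i : Fin N => X i ω) (fun i : Fin N => Y i ω) - aN μ c N|} ≤
      2 * Real.exp (- ε ^ 2 / (2 * ((2 * N : ℕ) * D ^ 2))) := by
  obtain ⟨s0⟩ : Nonempty S := nonempty_of_isProbabilityMeasure μ
  have hD0 : 0 ≤ D := (h0 s0 s0).trans (hD _ _)
  classical
  let E : Fin N ⊕ Fin N ≃ Fin (2 * N) := finSumFinEquiv.trans (finCongr (two_mul N).symm)
  let V : Fin (2 * N) → ℕ ⊕ ℕ := fun j => Sum.map (fun i : Fin N => (i : ℕ)) (fun i : Fin N => (i:ℕ)) (E.symm j)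
  have hV : Function.Injective V := (Function.Injective.sumMap Fin.val_injective Fin.val_injective).comp
    E.symm.injective
  let f : (Fin (2 * N) → S) → ℝ := fun w => Lc c (w ∘ E ∘ Sum.inl) (w ∘ E ∘ Sum.inr)
  have hfm : Measurable f := meas_LcW hc _ _
  have hfi : ∫ w, f w ∂(Measure.pi fun _ => μ) = aN μ c N := aN_eq μ hc E E.injective
  have hupd : ∀ (x : Fin (2 * N) → S) i s, f x ≤ f (Function.update x i s) + D ∧
      f (Function.update x i s) ≤ f x + D := by
    intro x i s
    have key : ∀ x' y' : Fin (2 * N) → S, (∀ j, j ≠ i → x' j = y' j) → f x' ≤ f y' + D := by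
      intro x' y' h
      refine (Lc_diff h0 hD _ _ (y' ∘ E ∘ Sum.inl) (y' ∘ E ∘ Sum.inr)).trans ?_
      have : ((Finset.univ.filter fun k => (x' ∘ E ∘ Sum.inl) k ≠ (y' ∘ E ∘ Sum.inl) k).card
        + (Finset.univ.filter fun k => (x' ∘ E ∘ Sum.inr) k ≠ (y' ∘ E ∘ Sum.inr) k).card) ≤ 1 := by
        rcases hEi : E.symm i with k | k
        · have hk : ∀ j, E j ≠ i ↔ j ≠ Sum.inl k := by
            intro j; rw [← hEi, Ne, Ne, Equiv.eq_symm_apply]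
          have h1 : (Finset.univ.filter fun k => (x' ∘ E ∘ Sum.inl) k ≠ (y' ∘ E ∘ Sum.inl) k) ⊆ {k} := by
            intro j hj
            simp only [Finset.mem_filter, Function.comp] at hj
            by_contra hjk
            exact hj.2 (h _ ((hk _).2 (by simpa using hjk)))
          have h2 : (Finset.univ.filter fun k => (x' ∘ E ∘ Sum.inr) k ≠ (y' ∘ E ∘ Sum.inr) k) = ∅ := by
            rw [Finset.filter_eq_empty_iff]
            intro j _ hj
            exact hj (h _ ((hk _).2 (by simp)))
          rw [h2]
          simpa using Finset.card_le_card h1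
        · have hk : ∀ j, E j ≠ i ↔ j ≠ Sum.inr k := by
            intro j; rw [← hEi, Ne, Ne, Equiv.eq_symm_apply]
          have h1 : (Finset.univ.filter fun k => (x' ∘ E ∘ Sum.inr) k ≠ (y' ∘ E ∘ Sum.inr) k) ⊆ {k} := by
            intro j hj
            simp only [Finset.mem_filter, Function.comp] at hj
            by_contra hjk
            exact hj.2 (h _ ((hk _).2 (by simpa using hjk)))
          have h2 : (Finset.univ.filter fun k => (x' ∘ E ∘ Sum.inl) k ≠ (y' ∘ E ∘ Sum.inl) k) = ∅ := by
            rw [Finset.filter_eq_empty_iff]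
            intro j _ hj
            exact hj (h _ ((hk _).2 (by simp)))
          rw [h2]
          simpa using Finset.card_le_card h1
      have h' : (((Finset.univ.filter fun k => (x' ∘ E ∘ Sum.inl) k ≠ (y' ∘ E ∘ Sum.inl) k).card : ℝ)
        + ((Finset.univ.filter fun k => (x' ∘ E ∘ Sum.inr) k ≠ (y' ∘ E ∘ Sum.inr) k).card : ℝ)) ≤ 1 := by
        exact_mod_cast this
      have := mul_le_mul_of_nonneg_left h' hD0
      rw [mul_one] at this
      exact add_le_add_right this _
    exact ⟨key _ _ fun j hj => by simp [hj], key _ _ fun j hj => by simp [hj]⟩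
  have hmc := mcdiarmid μ D.toNNReal (2 * N) f hfm ⟨_, fun x => abs_Lc_le h0 hD _ _⟩ (by
    intro x i s
    rw [Real.coe_toNNReal _ hD0, abs_le]
    constructor <;> linarith [(hupd x i s).1, (hupd x i s).2])
  rw [hfi] at hmc
  rw [← iid_map μ hm hi hl hV] at hmc
  have hZ : Measurable (fun ω k => Sum.elim X Y (V k) ω) := measurable_pi_lambda _ fun k => hm _
  have hmc2 := HasSubgaussianMGF.of_map hZ.aemeasurable hmc
  have hfe : ((fun x => f x - aN μ c N) ∘ fun ω k => Sum.elim X Y (V k) ω) =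
      fun ω => Lc c (fun i : Fin N => X i ω) (fun i : Fin N => Y i ω) - aN μ c N := by
    funext ω
    simp [f, V, Function.comp_def]
  rw [hfe] at hmc2
  have t1 := hmc2.measure_ge_le hε
  have t2 := hmc2.neg.measure_ge_le hε
  have hcst : (((2 * N : ℕ) : NNReal) * D.toNNReal ^ 2 : NNReal) = ((2 * N : ℕ) * D ^ 2 : ℝ) := by
    push_cast
    rw [Real.coe_toNNReal _ hD0]
  rw [hcst] at t1 t2
  have hsub : {ω | ε ≤ |Lc c (fun i : Fin N => X i ω) (fun i : Fin N => Y i ω) - aN μ c N|} ⊆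
      {ω | ε ≤ Lc c (fun i : Fin N => X i ω) (fun i : Fin N => Y i ω) - aN μ c N} ∪
      {ω | ε ≤ (-fun ω => Lc c (fun i : Fin N => X i ω) (fun i : Fin N => Y i ω) - aN μ c N) ω} := by
    intro ω hω
    simp only [Set.mem_setOf_eq, le_abs] at hω
    rcases hω with h | h
    · exact Or.inl h
    · exact Or.inr (by simpa using h)
  refine (measureReal_mono hsub).trans ((measureReal_union_le _ _).trans ?_)
  linarith

end iid

open Classical in
lemma balance {K : Type*} [Fintype K] {n N : ℕ} (hN : N = Fintype.card K * n) (J : Fin N → K) :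
    ∃ e : K × Fin n ≃ Fin N, ((Finset.univ.filter fun p => J (e p) ≠ p.1).card : ℝ) ≤
      ∑ k, |((Finset.univ.filter fun i => J i = k).card : ℝ) - n| := by
  have e0 : K × Fin n ≃ Fin N := Fintype.equivOfCardEq (by simp [hN])
  let A : K → Finset (Fin N) := fun k => Finset.univ.filter fun i => J i = k
  let f : K × Fin n → Fin N := fun p =>
    if h : (p.2 : ℕ) < (A p.1).card then ((A p.1).equivFin.symm ⟨p.2, h⟩ : Fin N) else e0 p
  let s : Finset (K × Fin n) := Finset.univ.filter fun p => (p.2 : ℕ) < (A p.1).card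
  have hfA : ∀ p ∈ s, J (f p) = p.1 := by
    intro p hp
    have h : (p.2 : ℕ) < (A p.1).card := (Finset.mem_filter.1 hp).2
    have : f p = ((A p.1).equivFin.symm ⟨p.2, h⟩ : Fin N) := by simp only [f, dif_pos h]
    rw [this]
    exact (Finset.mem_filter.1 ((A p.1).equivFin.symm ⟨p.2, h⟩).2).2
  have hinj : Set.InjOn f s := by
    rintro ⟨k, i⟩ hp ⟨l, j⟩ hq hpq
    have h1 := hfA _ hp
    have h2 := hfA _ hq
    rw [hpq, h2] at h1
    simp only at h1
    subst h1
    have hp' : (i : ℕ) < (A l).card := (Finset.mem_filter.1 hp).2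
    have hq' : (j : ℕ) < (A l).card := (Finset.mem_filter.1 hq).2
    simp only [f, dif_pos hp', dif_pos hq'] at hpq
    have h3 := (A l).equivFin.symm.injective (Subtype.ext hpq)
    simp only [Fin.mk.injEq] at h3
    rw [Fin.ext h3]
  obtain ⟨g, hg⟩ := Finset.exists_equiv_extend_of_card_eq (t := (Finset.univ : Finset (Fin N)))
    (s := s) (f := f) (by simp [hN]) (Finset.subset_univ _) hinj
  refine ⟨g.trans (Equiv.subtypeUnivEquiv (by simp)), ?_⟩
  have hsub : (Finset.univ.filter fun p : K × Fin n =>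
      J ((g.trans (Equiv.subtypeUnivEquiv (by simp))) p) ≠ p.1) ⊆
      Finset.univ.filter fun p : K × Fin n => (A p.1).card ≤ (p.2 : ℕ) := by
    intro p hp
    simp only [Finset.mem_filter, Finset.mem_univ, true_and] at hp ⊢
    by_contra hlt
    have hps : p ∈ s := by simpa [s] using hlt
    apply hp
    have h1 := hg p hps
    rw [← hfA p hps, ← h1]
    rfl
  refine (Nat.cast_le.2 (Finset.card_le_card hsub)).trans ?_
  rw [Finset.card_filter, Fintype.sum_prod_type]
  push_cast
  refine Finset.sum_le_sum fun k _ => ?_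
  have h4 : (∑ i : Fin n, if (A k).card ≤ (i : ℕ) then (1 : ℝ) else 0) = ((n - (A k).card : ℕ) : ℝ) := by
    rw [Fin.sum_univ_eq_sum_range (fun i => if (A k).card ≤ i then (1:ℝ) else 0) n,
      Finset.sum_ite, Finset.sum_const_zero, add_zero, Finset.sum_const, nsmul_eq_mul, mul_one]
    congr 1
    have : (Finset.range n).filter (fun i => (A k).card ≤ i) = Finset.Ico (A k).card n := by
      ext i; simp [and_comm]
    rw [this, Nat.card_Ico]
  rw [h4]
  rcases le_total n (A k).card with h | h
  · rw [Nat.sub_eq_zero_of_le h]; simp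
  · rw [Nat.cast_sub h, abs_sub_comm]
    exact le_abs_self _

open Classical in
lemma count_dev {K : Type*} [Fintype K] [MeasurableSpace K] [MeasurableSingletonClass K]
    (ν : Measure K) [IsProbabilityMeasure ν] (hν : ∀ k, ν.real {k} = 1 / Fintype.card K)
    {n N : ℕ} (hN : N = Fintype.card K * n) (k : K) :
    ∫ J : Fin N → K, |((Finset.univ.filter fun i => J i = k).card : ℝ) - n|
      ∂(Measure.pi fun _ => ν) ≤ Real.sqrt n := by
  have hK : (Fintype.card K : ℝ) ≠ 0 := by
    have : Nonempty K := ⟨k⟩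
    exact_mod_cast Fintype.card_ne_zero
  set P := Measure.pi fun _ : Fin N => ν
  let B : Fin N → (Fin N → K) → ℝ := fun i J => if J i = k then 1 else 0
  have hBm : ∀ i, Measurable (B i) := fun i => measurable_of_finite _
  have hBL : ∀ i, MemLp (B i) 2 P := fun i => MemLp.of_bound (hBm i).aestronglyMeasurable 1
    (Eventually.of_forall fun J => by simp only [B]; split_ifs <;> simp)
  have hBi : ∀ i, ∫ J, B i J ∂P = 1 / Fintype.card K := by
    intro i
    have h1 : ∫ J, B i J ∂P = ∫ x, (if x = k then (1:ℝ) else 0) ∂ν := by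
      rw [← (measurePreserving_eval (fun _ : Fin N => ν) i).map_eq, integral_map]
      · exact (measurable_pi_apply i).aemeasurable
      · exact (measurable_of_finite _).aestronglyMeasurable
    rw [h1, ← hν k]
    have : (fun x => if x = k then (1:ℝ) else 0) = Set.indicator {k} 1 := by
      funext x; simp [Set.indicator]
    rw [this, integral_indicator_one (measurableSet_singleton k)]
  have hind : iIndepFun B P :=
    iIndepFun_pi (X := fun _ x => if x = k then (1:ℝ) else 0)
      (fun i => (measurable_of_finite _).aemeasurable)
  have hvar : variance (∑ i, B i) P ≤ n := by
    rw [IndepFun.variance_sum (fun i _ => hBL i) (fun i _ j _ hij => hind.indepFun hij)]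
    have : ∀ i, variance (B i) P ≤ 1 / Fintype.card K := by
      intro i
      refine (variance_le_expectation_sq (hBm i).aestronglyMeasurable).trans (le_of_eq ?_)
      rw [← hBi i]
      congr 1
      funext J
      simp only [B, Pi.pow_apply]
      split_ifs <;> simp
    refine (Finset.sum_le_sum fun i _ => this i).trans (le_of_eq ?_)
    simp [hN]
    field_simp
  have hsum : ∀ J, (∑ i, B i) J = ((Finset.univ.filter fun i => J i = k).card : ℝ) := by
    intro J; simp [B]
  have hmean : ∫ J, (∑ i, B i) J ∂P = n := by
    simp only [Finset.sum_apply]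
    rw [integral_finsetSum _ fun i _ => (hBL i).integrable (by norm_num)]
    simp [hBi, hN]
    field_simp
  rw [variance_eq_integral (measurable_of_finite _).aemeasurable, hmean] at hvar
  simp_rw [hsum] at hvar
  set G : (Fin N → K) → ℝ := fun J => |((Finset.univ.filter fun i => J i = k).card : ℝ) - n|
  have hG : MemLp G 2 P := MemLp.of_bound (measurable_of_finite _).aestronglyMeasurable (N + n)
    (Eventually.of_forall fun J => by
      simp only [G, Real.norm_eq_abs, abs_abs]
      refine (abs_sub _ _).trans ?_
      rw [Nat.abs_cast, Nat.abs_cast]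
      gcongr
      exact (Finset.card_le_univ _).trans (by simp))
  have h5 := variance_nonneg G P
  rw [variance_eq_sub hG] at h5
  have h6 : ∫ J, (G ^ 2) J ∂P ≤ n := by
    refine le_trans (le_of_eq ?_) hvar
    congr 1
    funext J
    simp [G, sq_abs]
  exact Real.le_sqrt_of_sq_le (by linarith)

lemma scaling {S : Type*} [MeasurableSpace S] (μ : Measure S) [IsProbabilityMeasure μ]
    {c : S → S → ℝ} (hc : Measurable fun p : S × S => c p.1 p.2)
    {D : ℝ} (h0 : ∀ u v, 0 ≤ c u v) (hD : ∀ u v, c u v ≤ D)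
    {K : Type*} [Fintype K] [MeasurableSpace K] [MeasurableSingletonClass K]
    (ν : Measure K) [IsProbabilityMeasure ν] (hν : ∀ k, ν.real {k} = 1 / Fintype.card K)
    (T : K → S → S) (hT : Measurable fun p : K × S => T p.1 p.2)
    {r : ℝ} (hTc : ∀ k u v, c (T k u) (T k v) ≤ r * c u v)
    (hμ : (ν.prod μ).map (fun p => T p.1 p.2) = μ) (n : ℕ) :
    aN μ c (Fintype.card K * n) ≤ Fintype.card K * r * aN μ c n
      + 2 * D * Fintype.card K * Real.sqrt n := by
  classical
  obtain ⟨s0⟩ : Nonempty S := nonempty_of_isProbabilityMeasure μ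
  have hD0 : 0 ≤ D := (h0 s0 s0).trans (hD _ _)
  obtain ⟨N, hN⟩ : ∃ N, N = Fintype.card K * n := ⟨_, rfl⟩
  rw [← hN]
  set P := Measure.pi fun _ : Fin N ⊕ Fin N => ν
  set Q := Measure.pi fun _ : Fin N ⊕ Fin N => μ with hQ
  let Φ : (Fin N ⊕ Fin N → K) × (Fin N ⊕ Fin N → S) → Fin N ⊕ Fin N → S :=
    fun p i => T (p.1 i) (p.2 i)
  have hΦm : Measurable Φ := by
    refine measurable_pi_lambda _ fun i => ?_
    have h : Measurable (fun p : (Fin N ⊕ Fin N → K) × (Fin N ⊕ Fin N → S) => (p.1 i, p.2 i)) :=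
      ((measurable_pi_apply i).comp measurable_fst).prodMk
        ((measurable_pi_apply i).comp measurable_snd)
    exact hT.comp h
  have hΦ : (P.prod Q).map Φ = Q := by
    have h1 := (measurePreserving_arrowProdEquivProdArrow K S (Fin N ⊕ Fin N)
      (fun _ => ν) (fun _ => μ))
    rw [← h1.map_eq, Measure.map_map hΦm h1.measurable]
    have h2 : Φ ∘ (MeasurableEquiv.arrowProdEquivProdArrow K S (Fin N ⊕ Fin N)) =
        fun x i => (fun p : K × S => T p.1 p.2) (x i) := rfl
    rw [h2]
    have hs : ∀ i : Fin N ⊕ Fin N, SigmaFinite ((ν.prod μ).map (fun p : K × S => T p.1 p.2)) := by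
      intro i; rw [hμ]; infer_instance
    rw [Measure.pi_map_pi (fun i => hT.aemeasurable)]
    simp_rw [hμ]
    rfl
  let dev : (Fin N → K) → ℝ := fun J => ∑ k, |((Finset.univ.filter fun i => J i = k).card : ℝ) - n|
  have hdev : ∀ e : Fin N → Fin N ⊕ Fin N, Function.Injective e →
      ∫ J, dev (J ∘ e) ∂P ≤ Fintype.card K * Real.sqrt n := by
    intro e he
    have h1 : ∫ J, dev (J ∘ e) ∂P = ∫ J, dev J ∂(Measure.pi fun _ => ν) := by
      rw [← (map_pi_precomp ν he).map_eq, integral_map (meas_precomp e).aemeasurable]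
      exact (measurable_of_finite _).aestronglyMeasurable
    rw [h1]
    simp only [dev]
    rw [integral_finsetSum _ fun k _ => Integrable.of_finite]
    refine (Finset.sum_le_sum fun k _ => count_dev ν hν hN k).trans (le_of_eq ?_)
    simp
  have hF : Measurable fun w : Fin N ⊕ Fin N → S => Lc c (w ∘ Sum.inl) (w ∘ Sum.inr) :=
    meas_LcW hc _ _
  have key : ∀ J : Fin N ⊕ Fin N → K,
      ∫ U, Lc c (Φ (J, U) ∘ Sum.inl) (Φ (J, U) ∘ Sum.inr) ∂Q ≤
        Fintype.card K * r * aN μ c n + D * (dev (J ∘ Sum.inl) + dev (J ∘ Sum.inr)) := by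
    intro J
    obtain ⟨e1, he1⟩ := balance hN (J ∘ Sum.inl)
    obtain ⟨e2, he2⟩ := balance hN (J ∘ Sum.inr)
    have hpt : ∀ U, Lc c (Φ (J, U) ∘ Sum.inl) (Φ (J, U) ∘ Sum.inr) ≤
        ∑ k, r * Lc c (U ∘ Sum.map (fun i => e1 (k, i)) (fun i => e2 (k, i)) ∘ Sum.inl)
          (U ∘ Sum.map (fun i => e1 (k, i)) (fun i => e2 (k, i)) ∘ Sum.inr)
        + D * (dev (J ∘ Sum.inl) + dev (J ∘ Sum.inr)) := by
      intro U
      rw [← Lc_equiv e1 e2]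
      refine (Lc_diff h0 hD _ _ (fun p => T p.1 (U (Sum.inl (e1 p))))
        (fun p => T p.1 (U (Sum.inr (e2 p))))).trans ?_
      refine add_le_add ?_ ?_
      · refine (Lc_prod_le _ _).trans (Finset.sum_le_sum fun k _ => ?_)
        exact Lc_scale (hTc k) (fun i => U (Sum.inl (e1 (k, i)))) (fun i => U (Sum.inr (e2 (k, i))))
      · refine mul_le_mul_of_nonneg_left (add_le_add (le_trans ?_ he1) (le_trans ?_ he2)) hD0
        all_goals
          refine Nat.cast_le.2 (Finset.card_le_card ?_)
          intro p hp
          simp only [Finset.mem_filter, Finset.mem_univ, true_and, Function.comp, Φ] at hp ⊢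
          intro h
          exact hp (by rw [h])
    have hinj : ∀ k, Function.Injective (Sum.map (fun i => e1 (k, i)) (fun i => e2 (k, i)) :
        Fin n ⊕ Fin n → Fin N ⊕ Fin N) := fun k => Function.Injective.sumMap
      (e1.injective.comp (Prod.mk_right_injective k)) (e2.injective.comp (Prod.mk_right_injective k))
    have hi1 : ∀ k, Integrable (fun U : Fin N ⊕ Fin N → S =>
        r * Lc c (U ∘ Sum.map (fun i => e1 (k, i)) (fun i => e2 (k, i)) ∘ Sum.inl)
          (U ∘ Sum.map (fun i => e1 (k, i)) (fun i => e2 (k, i)) ∘ Sum.inr)) Q := fun k =>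
      (int_LcW μ hc h0 hD _ _).const_mul r
    refine (integral_mono ?_ ((integrable_finsetSum _ fun k _ => hi1 k).add
      (integrable_const (D * (dev (J ∘ Sum.inl) + dev (J ∘ Sum.inr))))) hpt).trans ?_
    · exact integrable_of_bdd (hF.comp (hΦm.comp (measurable_const.prodMk measurable_id)))
        fun U => abs_Lc_le h0 hD _ _
    · have : ∀ k, ∫ U : Fin N ⊕ Fin N → S,
        r * Lc c (U ∘ Sum.map (fun i => e1 (k, i)) (fun i => e2 (k, i)) ∘ Sum.inl)
          (U ∘ Sum.map (fun i => e1 (k, i)) (fun i => e2 (k, i)) ∘ Sum.inr) ∂Q = r * aN μ c n := by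
        intro k
        rw [integral_const_mul, aN_eq μ hc _ (hinj k)]
      simp only [Pi.add_apply]
      rw [integral_add (integrable_finsetSum _ fun k _ => hi1 k) (integrable_const _),
        integral_finsetSum _ fun k _ => hi1 k]
      simp only [this]
      simp [mul_assoc]
  have hint : Integrable (fun p => Lc c (Φ p ∘ Sum.inl) (Φ p ∘ Sum.inr)) (P.prod Q) :=
    integrable_of_bdd (hF.comp hΦm) fun U => abs_Lc_le h0 hD _ _
  calc aN μ c N = ∫ p, Lc c (Φ p ∘ Sum.inl) (Φ p ∘ Sum.inr) ∂(P.prod Q) := by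
        unfold aN
        rw [← hQ]
        conv_lhs => rw [← hΦ]
        rw [integral_map hΦm.aemeasurable hF.aestronglyMeasurable]
    _ = ∫ J, ∫ U, Lc c (Φ (J, U) ∘ Sum.inl) (Φ (J, U) ∘ Sum.inr) ∂Q ∂P := integral_prod _ hint
    _ ≤ ∫ J, (Fintype.card K * r * aN μ c n + D * (dev (J ∘ Sum.inl) + dev (J ∘ Sum.inr))) ∂P :=
        integral_mono Integrable.of_finite Integrable.of_finite key
    _ = Fintype.card K * r * aN μ c n + D * (∫ J, dev (J ∘ Sum.inl) ∂P + ∫ J, dev (J ∘ Sum.inr) ∂P) := by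
        rw [integral_add Integrable.of_finite Integrable.of_finite, integral_const_mul,
          integral_const_mul, integral_add Integrable.of_finite Integrable.of_finite]
        simp
    _ ≤ Fintype.card K * r * aN μ c n + D * (Fintype.card K * Real.sqrt n + Fintype.card K * Real.sqrt n) := by
        gcongr
        · exact hdev _ Sum.inl_injective
        · exact hdev _ Sum.inr_injective
    _ = _ := by ring

lemma aN_lower {S : Type*} [MeasurableSpace S] (μ : Measure S) [IsProbabilityMeasure μ]
    {c : S → S → ℝ} (hc : Measurable fun p : S × S => c p.1 p.2)
    {D : ℝ} (h0 : ∀ u v, 0 ≤ c u v) (hD : ∀ u v, c u v ≤ D)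
    {r p : ℝ} (hr : 0 ≤ r) (hp : ∀ u, μ.real {v | c u v < r} ≤ p) (n : ℕ) :
    r * (n - n ^ 2 * p) ≤ aN μ c n := by
  classical
  set Q := Measure.pi fun _ : Fin n ⊕ Fin n => μ with hQ
  let A : Set (S × S) := {q | c q.1 q.2 < r}
  have hA : MeasurableSet A := measurableSet_lt hc measurable_const
  let G : Fin n → Fin n → (Fin n ⊕ Fin n → S) → ℝ := fun i j w =>
    A.indicator 1 (w (Sum.inl i), w (Sum.inr j))
  have hpair : ∀ i j : Fin n, Measurable fun w : Fin n ⊕ Fin n → S => (w (Sum.inl i), w (Sum.inr j)) :=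
    fun i j => (measurable_pi_apply _).prodMk (measurable_pi_apply _)
  have hGm : ∀ i j, Measurable (G i j) := fun i j =>
    (measurable_one.indicator hA).comp (hpair i j)
  have hG1 : ∀ i j w, G i j w = 1 ∨ G i j w = 0 := by
    intro i j w
    simp only [G, Set.indicator]
    split_ifs <;> simp
  have hGi : ∀ i j, Integrable (G i j) Q := fun i j => integrable_of_bdd (B := 1) (hGm i j) fun w => by
    rcases hG1 i j w with h | h <;> simp [h]
  have hind : iIndepFun (fun (i : Fin n ⊕ Fin n) (w : Fin n ⊕ Fin n → S) => w i) Q :=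
    iIndepFun_pi (X := fun _ s => s) (fun i => aemeasurable_id)
  have hGp : ∀ i j, ∫ w, G i j w ∂Q ≤ p := by
    intro i j
    have h1 := (indepFun_iff_map_prod_eq_prod_map_map (measurable_pi_apply _).aemeasurable
      (measurable_pi_apply _).aemeasurable).1
      (hind.indepFun (show (Sum.inl i : Fin n ⊕ Fin n) ≠ Sum.inr j by simp))
    rw [show Q.map (fun w => w (Sum.inl i)) = μ from (measurePreserving_eval (fun _ => μ) _).map_eq,
      show Q.map (fun w => w (Sum.inr j)) = μ from (measurePreserving_eval (fun _ => μ) _).map_eq] at h1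
    have h2 : ∫ w, G i j w ∂Q = ∫ q, A.indicator 1 q ∂(μ.prod μ) := by
      rw [← h1, integral_map (hpair i j).aemeasurable
        (measurable_one.indicator hA).aestronglyMeasurable]
    rw [h2, integral_prod]
    · refine (integral_mono_of_nonneg ?_ (integrable_const p) ?_).trans (by simp)
      · exact Eventually.of_forall fun u => integral_nonneg fun v =>
          Set.indicator_nonneg (fun _ _ => zero_le_one) _
      · refine Eventually.of_forall fun u => ?_
        have h3 : (fun v => A.indicator (1 : S × S → ℝ) (u, v)) = Set.indicator {v | c u v < r} 1 := by
          funext v; simp [A, Set.indicator]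
        simp only [h3]
        rw [integral_indicator_one]
        · exact hp u
        · exact measurableSet_lt (hc.comp (measurable_const.prodMk measurable_id)) measurable_const
    · refine integrable_of_bdd (B := 1) (measurable_one.indicator hA) fun q => ?_
      simp only [Set.indicator]
      split_ifs <;> simp
  have hpt : ∀ w : Fin n ⊕ Fin n → S, r * (n - ∑ i, ∑ j, G i j w) ≤
      Lc c (w ∘ Sum.inl) (w ∘ Sum.inr) := by
    intro w
    refine le_Lc _ _ _ fun σ => ?_
    have h1 : ∀ i, r * (1 - ∑ j, G i j w) ≤ c (w (Sum.inl i)) (w (Sum.inr (σ i))) := by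
      intro i
      have hnn : ∀ j, 0 ≤ G i j w := fun j => by rcases hG1 i j w with h | h <;> simp [h]
      have hs : G i (σ i) w ≤ ∑ j, G i j w :=
        Finset.single_le_sum (fun j _ => hnn j) (Finset.mem_univ _)
      have hle : r * (1 - ∑ j, G i j w) ≤ r * (1 - G i (σ i) w) := by gcongr
      refine hle.trans ?_
      by_cases h : c (w (Sum.inl i)) (w (Sum.inr (σ i))) < r
      · have : G i (σ i) w = 1 := Set.indicator_of_mem (show _ ∈ A from h) _
        rw [this]; simpa using h0 _ _
      · have : G i (σ i) w = 0 := Set.indicator_of_notMem (show _ ∉ A from h) _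
        rw [this]; simpa using h
    refine le_trans (le_of_eq ?_) (Finset.sum_le_sum fun i _ => h1 i)
    rw [← Finset.mul_sum, Finset.sum_sub_distrib]
    simp
  have hi2 : Integrable (fun w => ∑ i, ∑ j, G i j w) Q :=
    integrable_finsetSum _ fun i _ => integrable_finsetSum _ fun j _ => hGi i j
  have h5 := integral_mono (((integrable_const (n : ℝ)).sub hi2).const_mul r)
    (int_LcW μ hc h0 hD Sum.inl Sum.inr) hpt
  refine le_trans ?_ h5
  rw [integral_const_mul]
  refine mul_le_mul_of_nonneg_left ?_ hr
  simp only [Pi.sub_apply]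
  rw [integral_sub (integrable_const _) hi2, integral_finsetSum _ fun i _ =>
    integrable_finsetSum _ fun j _ => hGi i j]
  simp_rw [integral_finsetSum _ fun j _ => hGi _ j]
  have h6 : ∑ i, ∑ j, ∫ w, G i j w ∂Q ≤ n ^ 2 * p := by
    refine (Finset.sum_le_sum fun i _ => Finset.sum_le_sum fun j _ => hGp i j).trans (le_of_eq ?_)
    simp; ring
  simp
  linarith

section geom
variable {d : ℕ}

noncomputable def clampE (x : EuclideanSpace ℝ (Fin d)) : EuclideanSpace ℝ (Fin d) :=
  WithLp.toLp 2 fun i => max 0 (min 1 (x i))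

lemma clampE_apply (x : EuclideanSpace ℝ (Fin d)) (i : Fin d) : clampE x i = max 0 (min 1 (x i)) := rfl

lemma clampE_mem (x : EuclideanSpace ℝ (Fin d)) (i : Fin d) : 0 ≤ clampE x i ∧ clampE x i ≤ 1 := by
  rw [clampE_apply]
  constructor <;> simp

lemma clampE_eq {x : EuclideanSpace ℝ (Fin d)} (h : ∀ i, 0 ≤ x i ∧ x i ≤ 1) : clampE x = x := by
  ext i
  rw [clampE_apply, min_eq_right (h i).2, max_eq_right (h i).1]

lemma continuous_clampE : Continuous (clampE : EuclideanSpace ℝ (Fin d) → _) := by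
  unfold clampE
  fun_prop

noncomputable def cE (x y : EuclideanSpace ℝ (Fin d)) : ℝ := dist (clampE x) (clampE y)

lemma measurable_cE : Measurable fun p : EuclideanSpace ℝ (Fin d) × EuclideanSpace ℝ (Fin d) =>
    cE p.1 p.2 := by
  have h : Continuous fun p : EuclideanSpace ℝ (Fin d) × EuclideanSpace ℝ (Fin d) =>
    cE p.1 p.2 := (continuous_clampE.comp continuous_fst).dist (continuous_clampE.comp continuous_snd)
  exact h.measurable

lemma cE_nonneg (x y : EuclideanSpace ℝ (Fin d)) : 0 ≤ cE x y := dist_nonneg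

lemma cE_le (x y : EuclideanSpace ℝ (Fin d)) : cE x y ≤ Real.sqrt d := by
  unfold cE
  rw [EuclideanSpace.dist_eq]
  apply Real.sqrt_le_sqrt
  have : ∀ i, dist (clampE x i) (clampE y i) ^ 2 ≤ 1 := by
    intro i
    have h1 := clampE_mem x i
    have h2 := clampE_mem y i
    rw [Real.dist_eq, sq_abs]
    nlinarith
  refine (Finset.sum_le_sum fun i _ => this i).trans (by simp)

def halfCube (d : ℕ) : Set (EuclideanSpace ℝ (Fin d)) := {x | ∀ i, 0 ≤ x i ∧ x i < 1}

lemma cube_ae : (unitCube d : Set (EuclideanSpace ℝ (Fin d))) =ᵐ[volume] halfCube d := by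
  have h1 := (PiLp.volume_preserving_ofLp (Fin d)).quasiMeasurePreserving.preimage_ae_eq
    (Measure.univ_pi_Ico_ae_eq_Icc (μ := fun _ : Fin d => (volume : Measure ℝ)) (f := 0) (g := 1))
  have e1 : (unitCube d) = (WithLp.ofLp : EuclideanSpace ℝ (Fin d) → _) ⁻¹' Set.Icc 0 1 := by
    ext x
    simp [unitCube, Pi.le_def, forall_and]
  have e2 : (halfCube d) = (WithLp.ofLp : EuclideanSpace ℝ (Fin d) → _) ⁻¹'
      (Set.univ.pi fun i => Set.Ico ((0 : Fin d → ℝ) i) ((1 : Fin d → ℝ) i)) := by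
    ext x
    simp [halfCube]
  rw [e1, e2]
  exact h1.symm

lemma unifCube_eq : unifCube d = volume.restrict (halfCube d) :=
  Measure.restrict_congr_set cube_ae

lemma measurableSet_cube : MeasurableSet (unitCube d) := by
  have : unitCube d = ⋂ i, {x : EuclideanSpace ℝ (Fin d) | x i ∈ Set.Icc (0:ℝ) 1} := by
    ext x; simp [unitCube]
  rw [this]
  exact MeasurableSet.iInter fun i => (by fun_prop : Measurable fun x : EuclideanSpace ℝ (Fin d) => x i)
    measurableSet_Icc

instance : IsProbabilityMeasure (unifCube d) := by
  constructor
  unfold unifCube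
  rw [Measure.restrict_apply_univ]
  have e1 : (unitCube d) = (WithLp.ofLp : EuclideanSpace ℝ (Fin d) → _) ⁻¹' Set.Icc 0 1 := by
    ext x
    simp [unitCube, Pi.le_def, forall_and]
  rw [e1, (PiLp.volume_preserving_ofLp (Fin d)).measure_preimage measurableSet_Icc.nullMeasurableSet,
    Real.volume_Icc_pi]
  simp

lemma ae_cube : ∀ᵐ x ∂(unifCube d), ∀ i, 0 ≤ x i ∧ x i ≤ 1 :=
  ae_restrict_mem measurableSet_cube

noncomputable def TE (m : ℕ) (j : Fin d → Fin m) (u : EuclideanSpace ℝ (Fin d)) :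
    EuclideanSpace ℝ (Fin d) :=
  (m : ℝ)⁻¹ • (clampE u + WithLp.toLp 2 fun i => ((j i : ℕ) : ℝ))

lemma TE_mem {m : ℕ} (j : Fin d → Fin m) (u : EuclideanSpace ℝ (Fin d)) (i : Fin d) :
    0 ≤ TE m j u i ∧ TE m j u i ≤ 1 := by
  have h := clampE_mem u i
  have hj : ((j i : ℕ) : ℝ) + 1 ≤ m := by exact_mod_cast (j i).2
  have hj0 : (0:ℝ) ≤ ((j i : ℕ) : ℝ) := by positivity
  have hm : (0:ℝ) < m := by linarith
  have : TE m j u i = (m : ℝ)⁻¹ * (clampE u i + ((j i : ℕ) : ℝ)) := by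
    simp [TE]; ring
  rw [this]
  constructor
  · have := h.1
    positivity
  · rw [inv_mul_le_iff₀ hm]
    linarith [h.2]

lemma cE_TE {m : ℕ} (j : Fin d → Fin m) (u v : EuclideanSpace ℝ (Fin d)) :
    cE (TE m j u) (TE m j v) ≤ (m : ℝ)⁻¹ * cE u v := by
  unfold cE
  rw [clampE_eq (TE_mem j u), clampE_eq (TE_mem j v)]
  unfold TE
  rw [dist_smul₀, dist_add_right]
  simp

lemma measurable_TE (m : ℕ) : Measurable fun p : (Fin d → Fin m) × EuclideanSpace ℝ (Fin d) =>
    TE m p.1 p.2 := by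
  refine measurable_from_prod_countable_right fun j => ?_
  have h : Continuous fun u : EuclideanSpace ℝ (Fin d) => TE m j u := by
    unfold TE
    have h1 : Continuous (clampE : EuclideanSpace ℝ (Fin d) → EuclideanSpace ℝ (Fin d)) :=
      continuous_clampE
    exact (h1.add continuous_const).const_smul (m : ℝ)⁻¹
  exact h.measurable

noncomputable def nuK (d m : ℕ) : Measure (Fin d → Fin m) :=
  (Fintype.card (Fin d → Fin m) : ENNReal)⁻¹ • Measure.count

instance nuK_prob (d m : ℕ) [NeZero m] : IsProbabilityMeasure (nuK d m) := by
  constructor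
  unfold nuK
  rw [Measure.smul_apply, Measure.count_univ, smul_eq_mul, ENat.card_eq_coe_fintype_card]
  refine ENNReal.inv_mul_cancel ?_ ?_
  · exact_mod_cast Fintype.card_ne_zero
  · simp

lemma nuK_real (d m : ℕ) (k : Fin d → Fin m) :
    (nuK d m).real {k} = 1 / Fintype.card (Fin d → Fin m) := by
  unfold nuK
  rw [measureReal_ennreal_smul_apply]
  simp [Measure.real]

lemma TE_map (m : ℕ) (hm : 0 < m) :
    ((nuK d m).prod (unifCube d)).map (fun p => TE m p.1 p.2) = unifCube d := by
  have : NeZero m := ⟨hm.ne'⟩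
  have hm0 : (0:ℝ) < m := by exact_mod_cast hm
  ext A hA
  rw [Measure.map_apply (measurable_TE m) hA, Measure.prod_apply (measurable_TE m hA)]
  unfold nuK
  rw [lintegral_smul_measure, lintegral_count, tsum_fintype]
  let cell : (Fin d → Fin m) → Set (EuclideanSpace ℝ (Fin d)) := fun k =>
    {x | ∀ i, ((k i : ℕ) : ℝ) ≤ m * x i ∧ m * x i < (k i : ℕ) + 1}
  have hcell : ∀ k, MeasurableSet (cell k) := by
    intro k
    have : cell k = ⋂ i, {x : EuclideanSpace ℝ (Fin d) | ((k i : ℕ) : ℝ) ≤ m * x i ∧ m * x i < (k i : ℕ) + 1} := by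
      ext x; simp [cell]
    rw [this]
    refine MeasurableSet.iInter fun i => ?_
    exact (by fun_prop : Measurable fun x : EuclideanSpace ℝ (Fin d) => m * x i) measurableSet_Ico
  have hdisj : Pairwise (Function.onFun Disjoint fun k => A ∩ cell k) := by
    intro k l hkl
    refine Set.disjoint_left.2 fun x hx hy => hkl ?_
    funext i
    have h1 := hx.2 i
    have h2 := hy.2 i
    apply Fin.ext
    have h3 : ((k i : ℕ) : ℝ) < (l i : ℕ) + 1 := by linarith
    have h4 : ((l i : ℕ) : ℝ) < (k i : ℕ) + 1 := by linarith
    have h3' : (k i : ℕ) < (l i : ℕ) + 1 := by exact_mod_cast h3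
    have h4' : (l i : ℕ) < (k i : ℕ) + 1 := by exact_mod_cast h4
    omega
  have hunion : ⋃ k, A ∩ cell k = A ∩ halfCube d := by
    rw [← Set.inter_iUnion]
    congr 1
    ext x
    simp only [Set.mem_iUnion]
    constructor
    · rintro ⟨k, hk⟩ i
      have h := hk i
      have hj : ((k i : ℕ) : ℝ) + 1 ≤ m := by exact_mod_cast (k i).2
      have hj0 : (0:ℝ) ≤ ((k i : ℕ) : ℝ) := by positivity
      constructor
      · by_contra hneg
        nlinarith
      · by_contra hneg
        nlinarith
    · intro hx
      have hlt : ∀ i, ⌊(m:ℝ) * x i⌋₊ < m := by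
        intro i
        rw [Nat.floor_lt (mul_nonneg hm0.le (hx i).1)]
        have := (hx i).2
        nlinarith
      refine ⟨fun i => ⟨⌊(m:ℝ) * x i⌋₊, hlt i⟩, fun i => ⟨?_, ?_⟩⟩
      · exact Nat.floor_le (mul_nonneg hm0.le (hx i).1)
      · exact Nat.lt_floor_add_one _
  have hk : ∀ k, unifCube d (Prod.mk k ⁻¹' ((fun p => TE m p.1 p.2) ⁻¹' A)) =
      (m : ENNReal) ^ d * volume (A ∩ cell k) := by
    intro k
    let v : EuclideanSpace ℝ (Fin d) := WithLp.toLp 2 fun i => ((k i : ℕ) : ℝ)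
    have hTk : Measurable fun u => TE m k u := (measurable_TE m).comp (measurable_const.prodMk measurable_id)
    have e1 : Prod.mk k ⁻¹' ((fun p => TE m p.1 p.2) ⁻¹' A) = (fun u => TE m k u) ⁻¹' A := rfl
    rw [e1, unifCube_eq, Measure.restrict_apply (hTk hA)]
    have e2 : (fun u => TE m k u) ⁻¹' A ∩ halfCube d =
        (fun u => u + v) ⁻¹' ((fun u => (m : ℝ)⁻¹ • u) ⁻¹' (A ∩ cell k)) := by
      ext u
      have hcl : u ∈ halfCube d ↔ (m:ℝ)⁻¹ • (u + v) ∈ cell k := by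
        simp only [halfCube, cell, Set.mem_setOf_eq]
        refine forall_congr' fun i => ?_
        have : (m:ℝ) * ((m:ℝ)⁻¹ • (u + v)) i = u i + (k i : ℕ) := by
          simp [v]
          field_simp
        rw [this]
        constructor
        · rintro ⟨h1, h2⟩; constructor <;> linarith
        · rintro ⟨h1, h2⟩; constructor <;> linarith
      simp only [Set.mem_inter_iff, Set.mem_preimage, ← hcl]
      refine and_congr_left fun hu => ?_
      have : clampE u = u := clampE_eq fun i => ⟨(hu i).1, (hu i).2.le⟩
      simp only [TE, this]
      rfl
    rw [e2, measure_preimage_add_right, Measure.addHaar_preimage_smul _ (inv_ne_zero hm0.ne')]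
    congr 1
    rw [finrank_euclideanSpace, Fintype.card_fin, inv_pow, inv_inv, abs_of_nonneg (by positivity),
      ENNReal.ofReal_pow hm0.le, ENNReal.ofReal_natCast]
  simp_rw [hk]
  rw [← Finset.mul_sum, ← tsum_fintype (L := .unconditional _), ← measure_iUnion hdisj (fun k => hA.inter (hcell k)), hunion,
    unifCube_eq, Measure.restrict_apply hA]
  rw [smul_eq_mul, ← mul_assoc]
  have : ((Fintype.card (Fin d → Fin m) : ENNReal))⁻¹ * (m : ENNReal) ^ d = 1 := by
    simp only [Fintype.card_fun, Fintype.card_fin, Nat.cast_pow]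
    refine ENNReal.inv_mul_cancel ?_ ?_
    · exact pow_ne_zero _ (by exact_mod_cast hm.ne')
    · exact ENNReal.pow_ne_top (by simp)
  rw [this, one_mul]

lemma scalingE (m : ℕ) (hm : 0 < m) (n : ℕ) :
    aN (unifCube d) cE (m ^ d * n) ≤ (m:ℝ) ^ d * (m:ℝ)⁻¹ * aN (unifCube d) cE n
      + 2 * Real.sqrt d * (m:ℝ) ^ d * Real.sqrt n := by
  have : NeZero m := ⟨hm.ne'⟩
  have h := scaling (unifCube d) measurable_cE cE_nonneg cE_le (nuK d m) (nuK_real d m)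
    (TE m) (measurable_TE m) (cE_TE) (TE_map m hm) n
  simpa using h

lemma ball_bound (d : ℕ) : ∃ C : ℝ, 0 < C ∧ ∀ (u : EuclideanSpace ℝ (Fin d)) (r : ℝ), 0 < r →
    (unifCube d).real {v | cE u v < r} ≤ C * r ^ d := by
  refine ⟨(volume (Metric.ball (0 : EuclideanSpace ℝ (Fin d)) 1)).toReal, ?_, fun u r hr => ?_⟩
  · exact ENNReal.toReal_pos (Metric.measure_ball_pos _ _ one_pos).ne' measure_ball_lt_top.ne
  · have h1 : (unifCube d) {v | cE u v < r} ≤ volume (Metric.ball (clampE u) r) := by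
      calc (unifCube d) {v | cE u v < r} ≤ (unifCube d) (Metric.ball (clampE u) r) := by
            apply measure_mono_ae
            filter_upwards [ae_cube] with v hv hlt
            have hlt' : dist (clampE u) (clampE v) < r := hlt
            rw [clampE_eq hv, dist_comm] at hlt'
            exact hlt'
        _ ≤ _ := Measure.restrict_apply_le _ _
    rw [Measure.addHaar_ball_of_pos _ _ hr, finrank_euclideanSpace, Fintype.card_fin] at h1
    unfold Measure.real
    refine (ENNReal.toReal_mono ?_ h1).trans (le_of_eq ?_)
    · exact ENNReal.mul_ne_top ENNReal.ofReal_ne_top measure_ball_lt_top.ne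
    · rw [ENNReal.toReal_mul, ENNReal.toReal_ofReal (by positivity), mul_comm]

end geom

lemma pow_alpha {d : ℕ} (hd : 3 ≤ d) (m : ℕ) (hm : 0 < m) :
    ((m : ℝ) ^ d) ^ (1 - 1 / (d : ℝ)) = (m : ℝ) ^ d * (m : ℝ)⁻¹ := by
  have hm0 : (0:ℝ) < m := by exact_mod_cast hm
  have hd0 : (d : ℝ) ≠ 0 := by positivity
  rw [← Real.rpow_natCast, ← Real.rpow_mul hm0.le, mul_sub, mul_one, mul_one_div_cancel hd0,
    Real.rpow_sub hm0, Real.rpow_one, div_eq_mul_inv]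

lemma exists_mk (d n N M : ℕ) (hd : 3 ≤ d) (hn : 0 < n) (hM : 0 < M) (h : M ^ d * n ≤ N) :
    ∃ m k : ℕ, M ≤ m ∧ m < 2 * M ∧ (m * 2 ^ k) ^ d * n ≤ N ∧ N < ((m + 1) * 2 ^ k) ^ d * n := by
  classical
  -- largest t
  have hb : ∃ t : ℕ, N < (t + 1) ^ d * n := ⟨N, by
    calc N < (N + 1) ^ 1 * 1 := by simp
      _ ≤ (N + 1) ^ d * n := Nat.mul_le_mul (Nat.pow_le_pow_right (by omega) (by omega)) hn⟩
  let t := Nat.find hb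
  have ht : N < (t + 1) ^ d * n := Nat.find_spec hb
  have htM : M ≤ t := by
    by_contra hlt
    have : (t + 1) ^ d * n ≤ M ^ d * n := Nat.mul_le_mul (Nat.pow_le_pow_left (by omega) _) le_rfl
    omega
  have ht2 : t ^ d * n ≤ N := by
    have := Nat.find_min hb (m := t - 1) (by omega)
    rw [not_lt, Nat.sub_add_cancel (by omega)] at this
    exact this
  let k := Nat.log 2 (t / M)
  have htM' : t / M ≠ 0 := by
    have := Nat.div_pos htM hM
    omega
  have hk1 : 2 ^ k ≤ t / M := Nat.pow_log_le_self 2 htM'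
  have hk2 : t / M < 2 ^ (k + 1) := Nat.lt_pow_succ_log_self (by norm_num) _
  have hk0 : 0 < 2 ^ k := by positivity
  refine ⟨t / 2 ^ k, k, ?_, ?_, ?_, ?_⟩
  · rw [Nat.le_div_iff_mul_le hk0, mul_comm]
    exact (Nat.le_div_iff_mul_le hM).1 hk1
  · rw [Nat.div_lt_iff_lt_mul hk0]
    have := (Nat.div_lt_iff_lt_mul hM).1 hk2
    rw [pow_succ] at this
    linarith
  · refine le_trans (Nat.mul_le_mul (Nat.pow_le_pow_left (Nat.div_mul_le_self _ _) _) le_rfl) ht2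
  · refine lt_of_lt_of_le ht (Nat.mul_le_mul (Nat.pow_le_pow_left ?_ _) le_rfl)
    have := Nat.lt_div_mul_add (a := t) hk0
    rw [add_mul, one_mul]
    omega

lemma seq_conv {d : ℕ} (hd : 3 ≤ d) (a : ℕ → ℝ) (h0 : ∀ n, 0 ≤ a n) {D C : ℝ} (hD0 : 0 ≤ D)
    (hC0 : 0 ≤ C) (hlin : ∀ n : ℕ, a n ≤ D * n) (hadd : ∀ n k, a (n + k) ≤ a n + a k)
    (hs : ∀ m : ℕ, 0 < m → ∀ n : ℕ, a (m ^ d * n) ≤ (m:ℝ) ^ d * (m:ℝ)⁻¹ * a n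
      + C * (m:ℝ) ^ d * Real.sqrt n)
    {c0 : ℝ} (hc0 : 0 < c0) (hlow : ∀ n : ℕ, 0 < n → c0 * (n:ℝ) ^ (1 - 1 / (d:ℝ)) ≤ a n) :
    ∃ β : ℝ, 0 < β ∧ Tendsto (fun n : ℕ => a n / (n:ℝ) ^ (1 - 1 / (d:ℝ))) atTop (nhds β) := by
  have hd0 : (3:ℝ) ≤ d := by exact_mod_cast hd
  obtain ⟨α, hα⟩ : ∃ α : ℝ, α = 1 - 1 / (d:ℝ) := ⟨_, rfl⟩
  have hα0 : 1 / 2 < α := by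
    rw [hα]
    have : 1 / (d:ℝ) ≤ 1 / 3 := one_div_le_one_div_of_le (by norm_num) hd0
    linarith
  rw [← hα] at hlow ⊢
  have hpow : ∀ m : ℕ, 0 < m → ((m : ℝ) ^ d) ^ α = (m : ℝ) ^ d * (m : ℝ)⁻¹ := by
    rw [hα]; exact pow_alpha hd
  -- p and q
  obtain ⟨p, hp⟩ : ∃ p : ℝ, p = (2:ℝ) ^ d * (2:ℝ)⁻¹ := ⟨_, rfl⟩
  obtain ⟨q, hq⟩ : ∃ q : ℝ, q = Real.sqrt ((2:ℝ) ^ d) := ⟨_, rfl⟩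
  have h2d : (8:ℝ) ≤ 2 ^ d := by
    calc (8:ℝ) = 2 ^ 3 := by norm_num
      _ ≤ 2 ^ d := pow_le_pow_right₀ (by norm_num) hd
  have hq2 : q ^ 2 = 2 ^ d := by rw [hq, Real.sq_sqrt (by positivity)]
  have hq0 : 0 ≤ q := by rw [hq]; positivity
  have hq1 : 2 < q := by nlinarith
  have hpq : q < p := by rw [hp, ← hq2]; nlinarith
  have hp0 : 0 < p := by linarith
  have hpα : ((2:ℝ) ^ d) ^ α = p := by
    have := hpow 2 (by norm_num)
    push_cast at this
    rw [this, hp]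
  have hs2 : ∀ n : ℕ, a (2 ^ d * n) ≤ p * a n + C * 2 ^ d * Real.sqrt n := by
    intro n
    have := hs 2 (by norm_num) n
    push_cast at this
    rw [hp]; exact this
  -- A
  obtain ⟨B, hB⟩ : ∃ B : ℝ, B = C * 2 ^ d / (p - q) := ⟨_, rfl⟩
  have hpq' : 0 < p - q := by linarith
  have hB0 : 0 ≤ B := by rw [hB]; positivity
  have hBpq : B * (p - q) = C * 2 ^ d := by rw [hB]; field_simp
  have hA1 : ∀ n : ℕ, a (2 ^ d * n) + B * Real.sqrt ((2 ^ d * n : ℕ) : ℝ) ≤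
      p * (a n + B * Real.sqrt n) := by
    intro n
    have e : Real.sqrt ((2 ^ d * n : ℕ) : ℝ) = q * Real.sqrt n := by
      push_cast
      rw [Real.sqrt_mul (by positivity), hq]
    rw [e]
    have := hs2 n
    rw [← hBpq] at this
    linarith
  have hA : ∀ k n : ℕ, a ((2 ^ d) ^ k * n) + B * Real.sqrt (((2 ^ d) ^ k * n : ℕ) : ℝ) ≤
      p ^ k * (a n + B * Real.sqrt n) := by
    intro k
    induction k with
    | zero => intro n; simp
    | succ k ih =>
      intro n
      have e : (2 ^ d) ^ (k + 1) * n = 2 ^ d * ((2 ^ d) ^ k * n) := by ring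
      rw [e]
      refine (hA1 _).trans ?_
      rw [pow_succ', mul_assoc]
      exact mul_le_mul_of_nonneg_left (ih n) hp0.le
  -- boundedness
  obtain ⟨E, hE0, hE⟩ : ∃ E : ℝ, 0 ≤ E ∧ ∀ n : ℕ, a n ≤ E * (n:ℝ) ^ α := by
    obtain ⟨B', hB'⟩ : ∃ B' : ℝ, B' = (C * 2 ^ d + D * 2 ^ d) / (p - q) := ⟨_, rfl⟩
    have hB'0 : 0 ≤ B' := by rw [hB']; positivity
    have hB'pq : B' * (p - q) = C * 2 ^ d + D * 2 ^ d := by rw [hB']; field_simp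
    have hrec : ∀ j k : ℕ, k < (2 ^ d) ^ j → a k ≤ B' * (p ^ j - q ^ j) := by
      intro j
      induction j with
      | zero =>
        intro k hk
        have : k = 0 := by simpa using hk
        subst this
        simpa using hlin 0
      | succ j ih =>
        intro k hk
        have hk2 : k / 2 ^ d < (2 ^ d) ^ j := by
          rw [Nat.div_lt_iff_lt_mul (by positivity), ← pow_succ]; exact hk
        have h1 := hadd (2 ^ d * (k / 2 ^ d)) (k % 2 ^ d)
        rw [Nat.div_add_mod] at h1
        have h2 := hs2 (k / 2 ^ d)
        have h3 := ih _ hk2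
        have h4 : a (k % 2 ^ d) ≤ D * 2 ^ d := by
          refine (hlin _).trans (mul_le_mul_of_nonneg_left ?_ hD0)
          have := (Nat.mod_lt k (show 0 < 2 ^ d by positivity)).le
          exact_mod_cast this
        have h5 : Real.sqrt ((k / 2 ^ d : ℕ) : ℝ) ≤ q ^ j := by
          rw [Real.sqrt_le_iff]
          refine ⟨by positivity, ?_⟩
          rw [← pow_mul, mul_comm j 2, pow_mul, hq2]
          exact_mod_cast hk2.le
        have h6 : 1 ≤ q ^ j := one_le_pow₀ (by linarith)
        have h7 : p * a (k / 2 ^ d) ≤ p * (B' * (p ^ j - q ^ j)) := mul_le_mul_of_nonneg_left h3 hp0.le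
        have h8 : C * 2 ^ d * Real.sqrt ((k / 2 ^ d : ℕ) : ℝ) ≤ C * 2 ^ d * q ^ j :=
          mul_le_mul_of_nonneg_left h5 (by positivity)
        have h9 : D * 2 ^ d ≤ D * 2 ^ d * q ^ j := le_mul_of_one_le_right (by positivity) h6
        have h10 : B' * (p ^ (j+1) - q ^ (j+1)) = p * (B' * (p ^ j - q ^ j)) + (B' * (p - q)) * q ^ j := by
          ring
        rw [h10, hB'pq]
        linarith
    refine ⟨B' * p, by positivity, fun n => ?_⟩
    rcases Nat.eq_zero_or_pos n with rfl | hn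
    · have h1 := hlin 0
      have h2 : (0:ℝ) ≤ B' * p * ((0:ℕ):ℝ) ^ α := by positivity
      simp only [Nat.cast_zero, mul_zero] at h1 h2 ⊢
      linarith
    · let j := Nat.log (2 ^ d) n
      have h2d' : 1 < 2 ^ d := Nat.one_lt_two_pow (by omega)
      have hj1 : (2 ^ d) ^ j ≤ n := Nat.pow_log_le_self _ hn.ne'
      have hj2 : n < (2 ^ d) ^ (j + 1) := Nat.lt_pow_succ_log_self h2d' _
      refine (hrec _ _ hj2).trans ?_
      have h1 : p ^ j ≤ (n:ℝ) ^ α := by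
        rw [← hpα, ← Real.rpow_natCast, ← Real.rpow_mul (by positivity), mul_comm,
          Real.rpow_mul (by positivity), Real.rpow_natCast]
        refine Real.rpow_le_rpow (by positivity) ?_ (by linarith)
        exact_mod_cast hj1
      calc B' * (p ^ (j+1) - q ^ (j+1)) ≤ B' * p ^ (j+1) := by
            refine mul_le_mul_of_nonneg_left ?_ hB'0
            have : 0 ≤ q ^ (j+1) := by positivity
            linarith
        _ = B' * p * p ^ j := by ring
        _ ≤ _ := mul_le_mul_of_nonneg_left h1 (by positivity)
  -- comparison
  have hcomp : ∀ M n N : ℕ, 0 < M → 0 < n → M ^ d * n ≤ N →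
      a N / (N:ℝ) ^ α ≤ a n / (n:ℝ) ^ α + (C + B) * (2 * M) * (n:ℝ) ^ (1/2 - α)
        + E * ((1 + 1 / (M:ℝ)) ^ d - 1) ^ α := by
    intro M n N hM hn hMN
    obtain ⟨m, k, hm1, hm2, hm3, hm4⟩ := exists_mk d n N M hd hn hM hMN
    have hm0 : 0 < m := by omega
    have hmR : (0:ℝ) < m := by exact_mod_cast hm0
    have hMR : (0:ℝ) < M := by exact_mod_cast hM
    have hnR : (0:ℝ) < n := by exact_mod_cast hn
    have hmM : (m:ℝ) ≤ 2 * M := by exact_mod_cast hm2.le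
    obtain ⟨T, hT⟩ : ∃ T : ℕ, T = (2 ^ d) ^ k * (m ^ d * n) := ⟨_, rfl⟩
    have hT' : (m * 2 ^ k) ^ d * n = T := by rw [hT, mul_pow, ← pow_mul, ← pow_mul, mul_comm k d]; ring
    rw [hT'] at hm3
    have hT0 : 0 < T := by rw [hT]; positivity
    have hTR : (0:ℝ) < T := by exact_mod_cast hT0
    have hNR : (T:ℝ) ≤ N := by exact_mod_cast hm3
    have hN0 : (0:ℝ) < N := by linarith
    obtain ⟨R, hR⟩ : ∃ R, N = T + R := ⟨N - T, by omega⟩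
    have hTα : (T:ℝ) ^ α = p ^ k * ((m:ℝ) ^ d * (m:ℝ)⁻¹) * (n:ℝ) ^ α := by
      rw [hT]; push_cast
      rw [Real.mul_rpow (by positivity) (by positivity), Real.mul_rpow (by positivity) (by positivity),
        hpow m hm0, ← hpα, ← Real.rpow_natCast (((2:ℝ) ^ d) ^ α) k, ← Real.rpow_mul (by positivity),
        mul_comm α, Real.rpow_mul (by positivity), Real.rpow_natCast]
      ring
    have hsum : a N ≤ a T + a R := by rw [hR]; exact hadd _ _
    have hmain : a T ≤ p ^ k * ((m:ℝ) ^ d * (m:ℝ)⁻¹) * (a n + (C + B) * (2 * M) * Real.sqrt n) := by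
      have h1 := hA k (m ^ d * n)
      rw [← hT] at h1
      have h2 : 0 ≤ B * Real.sqrt (T : ℝ) := by positivity
      have h3 : Real.sqrt ((m ^ d * n : ℕ) : ℝ) ≤ (m:ℝ) ^ d * Real.sqrt n := by
        push_cast
        rw [Real.sqrt_mul (by positivity)]
        gcongr
        rw [Real.sqrt_le_iff]
        refine ⟨by positivity, ?_⟩
        have : (1:ℝ) ≤ (m:ℝ) ^ d := one_le_pow₀ (by exact_mod_cast hm0)
        nlinarith
      have h4 := hs m hm0 n
      have h5 : a (m ^ d * n) + B * Real.sqrt ((m ^ d * n : ℕ) : ℝ) ≤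
          ((m:ℝ) ^ d * (m:ℝ)⁻¹) * (a n + (C + B) * (2 * M) * Real.sqrt n) := by
        have h6 : B * Real.sqrt ((m ^ d * n : ℕ) : ℝ) ≤ B * ((m:ℝ) ^ d * Real.sqrt n) :=
          mul_le_mul_of_nonneg_left h3 hB0
        have h7 : ((m:ℝ) ^ d * (m:ℝ)⁻¹) * ((C + B) * m * Real.sqrt n) =
          C * (m:ℝ) ^ d * Real.sqrt n + B * ((m:ℝ) ^ d * Real.sqrt n) := by field_simp
        have h8 : ((m:ℝ) ^ d * (m:ℝ)⁻¹) * ((C + B) * m * Real.sqrt n) ≤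
          ((m:ℝ) ^ d * (m:ℝ)⁻¹) * ((C + B) * (2 * M) * Real.sqrt n) := by gcongr
        rw [mul_add]
        linarith
      have h9 := mul_le_mul_of_nonneg_left h5 (show 0 ≤ p ^ k by positivity)
      rw [mul_assoc]
      linarith
    have hRα : (R:ℝ) ^ α ≤ ((1 + 1 / (M:ℝ)) ^ d - 1) ^ α * (N:ℝ) ^ α := by
      have hη : (0:ℝ) ≤ (1 + 1 / (M:ℝ)) ^ d - 1 := by
        have : (1:ℝ) ≤ (1 + 1 / (M:ℝ)) ^ d := one_le_pow₀ (by
          have : 0 ≤ 1 / (M:ℝ) := by positivity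
          linarith)
        linarith
      rw [← Real.mul_rpow hη hN0.le]
      refine Real.rpow_le_rpow (by positivity) ?_ (by linarith)
      have h1 : (N:ℝ) ≤ (1 + 1 / (m:ℝ)) ^ d * T := by
        have h2 : (N:ℝ) ≤ (((m:ℝ) + 1) * 2 ^ k) ^ d * n := by exact_mod_cast hm4.le
        refine h2.trans (le_of_eq ?_)
        rw [← hT']
        push_cast
        rw [← mul_assoc, ← mul_pow]
        congr 2
        field_simp
      have h3 : (1 + 1 / (m:ℝ)) ^ d ≤ (1 + 1 / (M:ℝ)) ^ d := by
        have : (M:ℝ) ≤ m := by exact_mod_cast hm1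
        gcongr
      have h4 : (N:ℝ) = T + R := by exact_mod_cast hR
      have h5 : (1 + 1 / (m:ℝ)) ^ d * T ≤ (1 + 1 / (M:ℝ)) ^ d * T := by gcongr
      have h6 : ((1 + 1 / (M:ℝ)) ^ d - 1) * T ≤ ((1 + 1 / (M:ℝ)) ^ d - 1) * N := by gcongr
      linarith
    have hNα : 0 < (N:ℝ) ^ α := by positivity
    have hTα0 : 0 < (T:ℝ) ^ α := by positivity
    have hnα0 : 0 < (n:ℝ) ^ α := by positivity
    have hTNα : (T:ℝ) ^ α ≤ (N:ℝ) ^ α := Real.rpow_le_rpow hTR.le hNR (by linarith)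
    have e1 : a T / (N:ℝ) ^ α ≤ a n / (n:ℝ) ^ α + (C + B) * (2 * M) * (n:ℝ) ^ (1/2 - α) := by
      calc a T / (N:ℝ) ^ α ≤ a T / (T:ℝ) ^ α := by
            have := h0 T
            gcongr
        _ ≤ p ^ k * ((m:ℝ) ^ d * (m:ℝ)⁻¹) * (a n + (C + B) * (2 * M) * Real.sqrt n) / (T:ℝ) ^ α := by
            gcongr
        _ = (a n + (C + B) * (2 * M) * Real.sqrt n) / (n:ℝ) ^ α := by
            rw [hTα]
            exact mul_div_mul_left _ _ (by positivity)
        _ = _ := by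
            rw [add_div, Real.rpow_sub hnR, ← Real.sqrt_eq_rpow]
            ring
    have e2 : a R / (N:ℝ) ^ α ≤ E * ((1 + 1 / (M:ℝ)) ^ d - 1) ^ α := by
      rw [div_le_iff₀ hNα]
      refine (hE R).trans ?_
      rw [mul_assoc]
      exact mul_le_mul_of_nonneg_left hRα hE0
    calc a N / (N:ℝ) ^ α ≤ (a T + a R) / (N:ℝ) ^ α := by gcongr
      _ = a T / (N:ℝ) ^ α + a R / (N:ℝ) ^ α := add_div _ _ _
      _ ≤ _ := add_le_add e1 e2
  -- limits
  set g : ℕ → ℝ := fun n => a n / (n:ℝ) ^ α with hg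
  have hg0 : ∀ n, 0 ≤ g n := fun n => div_nonneg (h0 n) (by positivity)
  have hgE : ∀ n, g n ≤ E := by
    intro n
    rcases Nat.eq_zero_or_pos n with rfl | hn
    · simp only [hg, Nat.cast_zero]
      rw [Real.zero_rpow (by linarith), div_zero]
      exact hE0
    · have : (0:ℝ) < (n:ℝ) ^ α := by positivity
      simp only [hg]
      rw [div_le_iff₀ this]
      exact hE n
  have hba : IsBoundedUnder (· ≤ ·) atTop g := isBoundedUnder_of ⟨E, hgE⟩
  have hbb : IsBoundedUnder (· ≥ ·) atTop g := isBoundedUnder_of ⟨0, hg0⟩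
  have hη : Tendsto (fun M : ℕ => E * ((1 + 1 / (M:ℝ)) ^ d - 1) ^ α) atTop (nhds 0) := by
    have h1 : Tendsto (fun M : ℕ => 1 / (M:ℝ)) atTop (nhds 0) := tendsto_one_div_atTop_nhds_zero_nat
    have h2 : Tendsto (fun M : ℕ => (1 + 1 / (M:ℝ)) ^ d - 1) atTop (nhds 0) := by
      have := ((h1.const_add 1).pow d).sub_const 1
      simpa using this
    have h3 := (h2.rpow_const (p := α) (Or.inr (by linarith))).const_mul E
    rwa [Real.zero_rpow (by linarith), mul_zero] at h3
  have hlim : limsup g atTop ≤ liminf g atTop := by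
    refine le_of_forall_pos_sub_le fun ε hε => ?_
    obtain ⟨M, hM1, hM2⟩ := ((hη.eventually (gt_mem_nhds (half_pos hε))).and
      (eventually_gt_atTop 0)).exists
    have hn : Tendsto (fun n : ℕ => (C + B) * (2 * M) * (n:ℝ) ^ (1/2 - α)) atTop (nhds 0) := by
      have h1 := ((tendsto_rpow_neg_atTop (show 0 < α - 1/2 by linarith)).comp
        tendsto_natCast_atTop_atTop).const_mul ((C + B) * (2 * M))
      rw [mul_zero] at h1
      refine h1.congr fun n => ?_
      simp
    refine le_liminf_of_le hba.isCoboundedUnder_ge ?_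
    filter_upwards [hn.eventually (gt_mem_nhds (half_pos hε)), eventually_gt_atTop 0] with n hn1 hn2
    have h1 : limsup g atTop ≤ g n + ε := by
      refine limsup_le_of_le hbb.isCoboundedUnder_le ?_
      filter_upwards [eventually_ge_atTop (M ^ d * n)] with N hN
      have := hcomp M n N hM2 hn2 hN
      simp only [hg]
      linarith
    linarith
  have hT := tendsto_of_le_liminf_of_limsup_le le_rfl hlim hba hbb
  refine ⟨_, ?_, hT⟩
  refine lt_of_lt_of_le hc0 (ge_of_tendsto hT ?_)
  filter_upwards [eventually_gt_atTop 0] with n hn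
  have : (0:ℝ) < (n:ℝ) ^ α := by positivity
  simp only [hg]
  rw [le_div_iff₀ this]
  exact hlow n hn

lemma aN_lowE {d : ℕ} (hd : 3 ≤ d) : ∃ c0 : ℝ, 0 < c0 ∧ ∀ n : ℕ, 0 < n →
    c0 * (n:ℝ) ^ (1 - 1 / (d:ℝ)) ≤ aN (unifCube d) cE n := by
  obtain ⟨C, hC, hb⟩ := ball_bound d
  have hd0 : d ≠ 0 := by omega
  refine ⟨(1 / 2) * (1 / (2 * C)) ^ (1 / (d:ℝ)), by positivity, fun n hn => ?_⟩
  have hn0 : (0:ℝ) < n := by exact_mod_cast hn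
  obtain ⟨r, hr⟩ : ∃ r : ℝ, r = (1 / (2 * C * n)) ^ (1 / (d:ℝ)) := ⟨_, rfl⟩
  have hr0 : 0 < r := by rw [hr]; positivity
  have hrd : r ^ d = 1 / (2 * C * n) := by
    rw [hr, one_div (d:ℝ)]
    exact Real.rpow_inv_natCast_pow (by positivity) hd0
  have h := aN_lower (unifCube d) measurable_cE cE_nonneg cE_le hr0.le
    (p := 1 / (2 * n)) (fun u => by
      refine (hb u r hr0).trans (le_of_eq ?_)
      rw [hrd]; field_simp) n
  refine le_trans (le_of_eq ?_) h
  have e1 : (n:ℝ) - n ^ 2 * (1 / (2 * n)) = n / 2 := by field_simp; ring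
  have e2 : r = (1 / (2 * C)) ^ (1 / (d:ℝ)) * ((n:ℝ) ^ (1 / (d:ℝ)))⁻¹ := by
    rw [hr, ← Real.inv_rpow hn0.le, ← Real.mul_rpow (by positivity) (by positivity)]
    congr 1
    field_simp
  rw [e1, e2, Real.rpow_sub hn0, Real.rpow_one]
  ring

lemma bc_summable {d : ℕ} (hd : 3 ≤ d) {δ : ℝ} (hδ : 0 < δ) :
    Summable fun N : ℕ => 2 * Real.exp (- (δ * (N:ℝ) ^ (1 - 1 / (d:ℝ))) ^ 2
      / (2 * ((2 * N : ℕ) * (Real.sqrt d) ^ 2))) := by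
  have hd3 : (3:ℝ) ≤ d := by exact_mod_cast hd
  have hd0 : (0:ℝ) < d := by linarith
  obtain ⟨κ, hκ⟩ : ∃ κ : ℝ, κ = δ ^ 2 / (4 * d) := ⟨_, rfl⟩
  have hκ0 : 0 < κ := by rw [hκ]; positivity
  have hs : Summable fun N : ℕ => (1440 / κ ^ 6) * (1 / (N:ℝ) ^ 2) :=
    (Real.summable_one_div_nat_pow.mpr (by norm_num)).mul_left _
  refine Summable.of_norm_bounded_eventually_nat hs ?_
  filter_upwards [eventually_ge_atTop 1] with N hN
  have hN1 : (1:ℝ) ≤ N := by exact_mod_cast hN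
  have hN0 : (0:ℝ) < N := by linarith
  rw [Real.norm_of_nonneg (by positivity), Real.sq_sqrt hd0.le]
  obtain ⟨x, hx⟩ : ∃ x : ℝ, x = κ * (N:ℝ) ^ (1 / 3 : ℝ) := ⟨_, rfl⟩
  have hx0 : 0 < x := by rw [hx]; positivity
  have hx6 : x ^ 6 = κ ^ 6 * N ^ 2 := by
    rw [hx, mul_pow]
    congr 1
    rw [← Real.rpow_natCast, ← Real.rpow_mul hN0.le, ← Real.rpow_natCast]
    norm_num
  have h1 : x ≤ (δ * (N:ℝ) ^ (1 - 1 / (d:ℝ))) ^ 2 / (2 * ((2 * N : ℕ) * d)) := by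
    have e : (δ * (N:ℝ) ^ (1 - 1 / (d:ℝ))) ^ 2 / (2 * ((2 * N : ℕ) * d))
        = κ * (N:ℝ) ^ (2 * (1 - 1 / (d:ℝ)) - 1) := by
      generalize 1 - 1 / (d:ℝ) = α
      rw [Real.rpow_sub hN0, Real.rpow_one, mul_comm 2 α, Real.rpow_mul hN0.le, hκ]
      push_cast
      rw [Real.rpow_two]
      field_simp
      norm_num
    rw [e, hx]
    refine mul_le_mul_of_nonneg_left (Real.rpow_le_rpow_of_exponent_le hN1 ?_) hκ0.le
    have : 1 / (d:ℝ) ≤ 1 / 3 := one_div_le_one_div_of_le (by norm_num) hd3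
    linarith
  have h2 := Real.pow_div_factorial_le_exp x hx0.le 6
  have h3 : Real.exp (- (δ * (N:ℝ) ^ (1 - 1 / (d:ℝ))) ^ 2 / (2 * ((2 * N : ℕ) * d)))
      ≤ (x ^ 6 / 720)⁻¹ := by
    rw [neg_div]
    refine (Real.exp_le_exp.mpr (neg_le_neg h1)).trans ?_
    rw [Real.exp_neg]
    refine inv_anti₀ (by positivity) (le_trans (le_of_eq ?_) h2)
    norm_num [Nat.factorial]
  calc _ ≤ 2 * (x ^ 6 / 720)⁻¹ := by linarith
    _ = _ := by rw [hx6]; field_simp; norm_num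

lemma bc_main {d : ℕ} (hd : 3 ≤ d) {Ω : Type*} [MeasurableSpace Ω] (P : Measure Ω)
    [IsProbabilityMeasure P] (X Y : ℕ → Ω → EuclideanSpace ℝ (Fin d))
    (hm : ∀ n, Measurable (Sum.elim X Y n)) (hi : iIndepFun (Sum.elim X Y) P)
    (hl : ∀ n, P.map (Sum.elim X Y n) = unifCube d) :
    ∀ᵐ ω ∂P, Tendsto (fun N : ℕ => (Lc cE (fun i : Fin N => X i ω) (fun i : Fin N => Y i ω)
      - aN (unifCube d) cE N) / (N:ℝ) ^ (1 - 1 / (d:ℝ))) atTop (nhds 0) := by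
  have key : ∀ k : ℕ, ∀ᵐ ω ∂P, ∀ᶠ N : ℕ in atTop, ω ∉ {ω | (1 / ((k:ℝ) + 1)) * (N:ℝ) ^ (1 - 1 / (d:ℝ)) ≤
      |Lc cE (fun i : Fin N => X i ω) (fun i : Fin N => Y i ω) - aN (unifCube d) cE N|} := by
    intro k
    refine ae_eventually_notMem ?_
    have hk : (0:ℝ) < 1 / ((k:ℝ) + 1) := by positivity
    refine ne_top_of_le_ne_top (bc_summable hd hk).tsum_ofReal_ne_top
      (ENNReal.tsum_le_tsum fun N => ?_)
    rw [← ofReal_measureReal (measure_ne_top _ _)]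
    refine ENNReal.ofReal_le_ofReal ?_
    exact conc (unifCube d) hm hi hl N (by positivity) measurable_cE cE_nonneg cE_le
  rw [← ae_all_iff] at key
  filter_upwards [key] with ω hω
  rw [Metric.tendsto_atTop']
  intro ε hε
  obtain ⟨k, hk⟩ := exists_nat_one_div_lt hε
  obtain ⟨N0, hN0⟩ := eventually_atTop.mp (hω k)
  refine ⟨N0, fun N hN => ?_⟩
  have h := hN0 N hN.le
  have hNp : (0:ℝ) < N := by
    have : 0 < N := by omega
    exact_mod_cast this
  have hp : 0 < (N:ℝ) ^ (1 - 1 / (d:ℝ)) := by positivity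
  rw [Real.dist_eq, sub_zero, abs_div, abs_of_pos hp, div_lt_iff₀ hp]
  have h' := not_le.mp h
  exact h'.trans (mul_lt_mul_of_pos_right hk hp)

lemma ae_eqE {d : ℕ} {Ω : Type*} [MeasurableSpace Ω] (P : Measure Ω)
    (X Y : ℕ → Ω → EuclideanSpace ℝ (Fin d))
    (hm : ∀ n, Measurable (Sum.elim X Y n))
    (hl : ∀ n, P.map (Sum.elim X Y n) = unifCube d) :
    ∀ᵐ ω ∂P, ∀ N : ℕ, LMBM (fun i : Fin N => X i ω) (fun j : Fin N => Y j ω)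
      = Lc cE (fun i : Fin N => X i ω) (fun i : Fin N => Y i ω) := by
  have key : ∀ n, ∀ᵐ ω ∂P, clampE (Sum.elim X Y n ω) = Sum.elim X Y n ω := by
    intro n
    have h := ae_cube (d := d)
    rw [← hl n] at h
    filter_upwards [ae_of_ae_map (hm n).aemeasurable h] with ω hω
    exact clampE_eq hω
  rw [← ae_all_iff] at key
  filter_upwards [key] with ω hω N
  rw [LMBM_eq_Lc]
  unfold Lc cE
  have hX : ∀ i, clampE (X i ω) = X i ω := fun i => hω (Sum.inl i)
  have hY : ∀ i, clampE (Y i ω) = Y i ω := fun i => hω (Sum.inr i)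
  simp only [hX, hY]

theorem almost_sure_convergence_MBM
    (d : ℕ) (hd : 3 ≤ d)
    (Ω : Type*) [MeasureSpace Ω] [IsProbabilityMeasure (ℙ : Measure Ω)]
    (X Y : ℕ → Ω → EuclideanSpace ℝ (Fin d))
    (hmeas : ∀ n, Measurable (Sum.elim X Y n))
    (hindep : iIndepFun (Sum.elim X Y) ℙ)
    (hunif : ∀ n, Measure.map (Sum.elim X Y n) ℙ = unifCube d) :
    ∃ β : ℝ, 0 < β ∧
      ∀ᵐ ω ∂(ℙ : Measure Ω),
        Tendsto
          (fun N : ℕ =>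
            LMBM (fun i : Fin N => X i ω) (fun j : Fin N => Y j ω) /
              (N : ℝ) ^ (1 - 1 / (d : ℝ)))
          atTop (nhds β) := by
  obtain ⟨c0, hc0, hlow⟩ := aN_lowE hd
  obtain ⟨β, hβ, hT⟩ := seq_conv hd (aN (unifCube d) cE) (aN_nonneg _ cE_nonneg)
    (D := Real.sqrt d) (C := 2 * Real.sqrt d) (Real.sqrt_nonneg _) (by positivity)
    (aN_le _ measurable_cE cE_nonneg cE_le) (aN_add _ measurable_cE cE_nonneg cE_le)
    (fun m hm n => scalingE m hm n) hc0 hlow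
  refine ⟨β, hβ, ?_⟩
  filter_upwards [bc_main hd ℙ X Y hmeas hindep hunif, ae_eqE ℙ X Y hmeas hunif] with ω h1 h2
  have h3 := h1.add hT
  rw [zero_add] at h3
  refine h3.congr fun N => ?_
  rw [h2 N]
  ring
end

section
/- Let d ≥ 1 and let X₁,…,X_N and Y₁,…,Y_N be 2N independent random points that are uniformly distributed in [0,1]^d, and let L_N = L_MBM(X₁,…,X_N; Y₁,…,Y_N). Then for every t > 0, P( | L_N/N^{1-1/d} − E(L_N/N^{1-1/d}) | > t ) ≤ 2 exp( − N^{1-2/d} t² / (8d) ). -/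
open MeasureTheory ProbabilityTheory Filter

lemma mcd_aux {E : Type*} [MeasurableSpace E] (μ : Measure E) [IsProbabilityMeasure μ] (c B : ℝ) :
    ∀ (n : ℕ) (F : (Fin n → E) → ℝ), Measurable F → (∀ x, |F x| ≤ B) →
    (∀ (k : Fin n) (x y : Fin n → E), (∀ j, j ≠ k → x j = y j) → F x ≤ F y + c) → ∀ s : ℝ,
    ∫ x, Real.exp (s * (F x - ∫ y, F y ∂(Measure.pi fun _ => μ))) ∂(Measure.pi fun _ : Fin n => μ)
      ≤ Real.exp (n * c ^ 2 * s ^ 2 / 2) := by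
  intro n
  induction n with
  | zero =>
    intro F hF hB hbd s
    have h : ∀ x : Fin 0 → E, F x = F (fun i => i.elim0) := fun x => by
      congr 1; exact Subsingleton.elim _ _
    simp_rw [h]
    simp
  | succ n ih =>
    intro F hF hB hbd s
    set π : Measure (Fin n → E) := Measure.pi fun _ => μ with hπ
    have hcons : Measurable (fun p : E × (Fin n → E) => (Fin.cons p.1 p.2 : Fin (n + 1) → E)) := by
      refine measurable_pi_iff.2 fun i => ?_
      refine Fin.cases ?_ (fun j => ?_) i
      · simpa using measurable_fst
      · simpa using! (measurable_pi_apply j).comp measurable_snd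
    have hchange : ∀ g : (Fin (n + 1) → E) → ℝ, ∫ x, g x ∂(Measure.pi fun _ : Fin (n + 1) => μ)
        = ∫ p, g (Fin.cons p.1 p.2) ∂(μ.prod π) := by
      intro g
      have := (measurePreserving_piFinSuccAbove (fun _ : Fin (n + 1) => μ) 0).symm
      rw [← this.integral_comp' g]
      simp [MeasurableEquiv.piFinSuccAbove, hπ]
      rfl
    have hFc : Measurable (fun p : E × (Fin n → E) => F (Fin.cons p.1 p.2)) := hF.comp hcons
    have hFx : ∀ x : Fin n → E, Measurable (fun e => F (Fin.cons e x)) := fun x =>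
      hFc.comp (measurable_id.prodMk measurable_const)
    have hbound : ∀ {α : Type _} [MeasurableSpace α] (ν : Measure α) [IsProbabilityMeasure ν]
        (f : α → ℝ) (C : ℝ), Measurable f → (∀ x, |f x| ≤ C) → Integrable f ν := by
      intro α _ ν _ f C hf hC
      exact Integrable.of_bound hf.aestronglyMeasurable C (ae_of_all _ hC)
    have hFint : ∀ x, Integrable (fun e => F (Fin.cons e x)) μ := fun x =>
      hbound _ _ B (hFx x) (fun e => hB _)
    set G : (Fin n → E) → ℝ := fun x => ∫ e, F (Fin.cons e x) ∂μ with hG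
    have hGm : Measurable G := by
      have : StronglyMeasurable (fun p : E × (Fin n → E) => F (Fin.cons p.1 p.2)) :=
        hFc.stronglyMeasurable
      exact (this.integral_prod_left').measurable
    have hGB : ∀ x, |G x| ≤ B := by
      intro x
      have := norm_integral_le_of_norm_le_const (μ := μ) (f := fun e => F (Fin.cons e x)) (C := B)
        (ae_of_all _ fun e => hB _)
      simpa [hG] using this
    have hGbd : ∀ (k : Fin n) (x y : Fin n → E), (∀ j, j ≠ k → x j = y j) → G x ≤ G y + c := by
      intro k x y hxy
      have h1 : G y + c = ∫ e, (F (Fin.cons e y) + c) ∂μ := by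
        rw [integral_add (hFint y) (integrable_const _)]; simp [hG]
      rw [h1]
      refine integral_mono (hFint x) ((hFint y).add (integrable_const _)) fun e => ?_
      refine hbd k.succ _ _ fun j => ?_
      refine Fin.cases ?_ (fun j' => ?_) j
      · simp
      · intro h
        simpa using hxy j' (fun h' => h (by rw [h']))
    have hEF : ∫ y, F y ∂(Measure.pi fun _ : Fin (n + 1) => μ) = ∫ y, G y ∂π := by
      rw [hchange, integral_prod_symm _ (hbound _ _ B hFc fun p => hB _)]
    rw [hEF, hchange]
    set m := ∫ y, G y ∂π with hm
    have hexpb : ∀ a : ℝ, |a| ≤ B → |Real.exp (s * (a - m))| ≤ Real.exp (|s| * (B + |m|)) := by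
      intro a ha
      rw [Real.abs_exp]
      apply Real.exp_le_exp.2
      refine (le_abs_self _).trans ?_
      rw [abs_mul]
      gcongr
      exact (abs_sub _ _).trans (by gcongr)
    have hIm : Measurable (fun p : E × (Fin n → E) => Real.exp (s * (F (Fin.cons p.1 p.2) - m))) :=
      Real.measurable_exp.comp ((hFc.sub_const m).const_mul s)
    have hI : Integrable (fun p : E × (Fin n → E) => Real.exp (s * (F (Fin.cons p.1 p.2) - m)))
        (μ.prod π) := hbound _ _ _ hIm (fun p => hexpb _ (hB _))
    rw [integral_prod_symm _ hI]
    have hinner : ∀ x, ∫ e, Real.exp (s * (F (Fin.cons e x) - m)) ∂μ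
        ≤ Real.exp (c ^ 2 * s ^ 2 / 2) * Real.exp (s * (G x - m)) := by
      intro x
      obtain ⟨e0⟩ : Nonempty E := μ.nonempty_of_neZero
      have hsub := hasSubgaussianMGF_of_mem_Icc (μ := μ) (X := fun e => F (Fin.cons e x))
        (a := F (Fin.cons e0 x) - c) (b := F (Fin.cons e0 x) + c) (hFx x).aemeasurable
        (ae_of_all _ fun e => by
          have key : ∀ a b : E, F (Fin.cons a x) ≤ F (Fin.cons b x) + c := by
            intro a b
            refine hbd 0 _ _ fun j => ?_
            refine Fin.cases ?_ (fun j' => ?_) j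
            · simp
            · simp
          constructor
          · linarith [key e0 e]
          · linarith [key e e0])
      have h2 := hsub.mgf_le s
      have h3 : (((‖(F (Fin.cons e0 x) + c) - (F (Fin.cons e0 x) - c)‖₊ / 2) ^ 2 : NNReal) : ℝ)
          = c ^ 2 := by
        push_cast
        have : (F (Fin.cons e0 x) + c) - (F (Fin.cons e0 x) - c) = 2 * c := by ring
        rw [this, Real.norm_eq_abs, div_pow, sq_abs]; ring
      rw [h3] at h2
      have h4 : ∀ e, Real.exp (s * (F (Fin.cons e x) - m))
          = Real.exp (s * (F (Fin.cons e x) - G x)) * Real.exp (s * (G x - m)) := by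
        intro e
        rw [← Real.exp_add]; congr 1; ring
      simp_rw [h4]
      rw [integral_mul_const]
      gcongr
      exact h2
    have hGi : Integrable (fun x => Real.exp (s * (G x - m))) π :=
      hbound _ _ _ (Real.measurable_exp.comp ((hGm.sub_const m).const_mul s))
        (fun p => hexpb _ (hGB _))
    calc ∫ x, ∫ e, Real.exp (s * (F (Fin.cons e x) - m)) ∂μ ∂π
        ≤ ∫ x, Real.exp (c ^ 2 * s ^ 2 / 2) * Real.exp (s * (G x - m)) ∂π :=
          integral_mono hI.integral_prod_right (hGi.const_mul _) hinner
      _ = Real.exp (c ^ 2 * s ^ 2 / 2) * ∫ x, Real.exp (s * (G x - m)) ∂π := integral_const_mul _ _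
      _ ≤ Real.exp (c ^ 2 * s ^ 2 / 2) * Real.exp (n * c ^ 2 * s ^ 2 / 2) := by
          gcongr
          exact ih G hGm hGB hGbd s
      _ = _ := by
          rw [← Real.exp_add]; congr 1; push_cast; ring

lemma LMBM_eq {d N : ℕ} (X Y : Fin N → EuclideanSpace ℝ (Fin d)) :
    LMBM X Y = ⨅ p : (Fin (min (Finset.univ : Finset (Fin N)).card
      (Finset.univ : Finset (Fin N)).card) ↪ Fin N) × (Fin (min (Finset.univ : Finset (Fin N)).card
      (Finset.univ : Finset (Fin N)).card) ↪ Fin N), ∑ i, dist (X (p.1 i)) (Y (p.2 i)) := by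
  unfold LMBM LMBMon iInf
  congr 1
  ext s
  constructor
  · rintro ⟨σ, τ, -, -, h⟩
    exact ⟨(σ, τ), h.symm⟩
  · rintro ⟨p, h⟩
    exact ⟨p.1, p.2, by simp, by simp, h.symm⟩

instance emb_ne (N : ℕ) : Nonempty ((Fin (min (Finset.univ : Finset (Fin N)).card
      (Finset.univ : Finset (Fin N)).card) ↪ Fin N) × (Fin (min (Finset.univ : Finset (Fin N)).card
      (Finset.univ : Finset (Fin N)).card) ↪ Fin N)) := by
  have h : min (Finset.univ : Finset (Fin N)).card (Finset.univ : Finset (Fin N)).card ≤ N := by simp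
  exact ⟨(Fin.castLEEmb h, Fin.castLEEmb h)⟩

lemma LMBM_lip {d N : ℕ} (X Y X' Y' : Fin N → EuclideanSpace ℝ (Fin d)) :
    LMBM X Y ≤ LMBM X' Y' + (∑ i, dist (X i) (X' i) + ∑ i, dist (Y i) (Y' i)) := by
  rw [LMBM_eq, LMBM_eq, ← sub_le_iff_le_add]
  refine le_ciInf fun p => ?_
  rw [sub_le_iff_le_add]
  refine (ciInf_le ⟨0, ?_⟩ p).trans ?_
  · rintro _ ⟨q, rfl⟩
    exact Finset.sum_nonneg fun _ _ => dist_nonneg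
  have h1 : ∀ (m : ℕ) (σ : Fin m ↪ Fin N) (Z Z' : Fin N → EuclideanSpace ℝ (Fin d)),
      ∑ i, dist (Z (σ i)) (Z' (σ i)) ≤ ∑ i, dist (Z i) (Z' i) := by
    intro m σ Z Z'
    rw [← Finset.sum_map Finset.univ σ (fun i => dist (Z i) (Z' i))]
    exact Finset.sum_le_sum_of_subset_of_nonneg (Finset.subset_univ _) fun _ _ _ => dist_nonneg
  calc ∑ i, dist (X (p.1 i)) (Y (p.2 i))
      ≤ ∑ i, (dist (X' (p.1 i)) (Y' (p.2 i))
          + (dist (X (p.1 i)) (X' (p.1 i)) + dist (Y (p.2 i)) (Y' (p.2 i)))) := by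
        refine Finset.sum_le_sum fun i _ => ?_
        have a := dist_triangle4 (X (p.1 i)) (X' (p.1 i)) (Y' (p.2 i)) (Y (p.2 i))
        rw [dist_comm (Y' (p.2 i)) (Y (p.2 i))] at a
        linarith
    _ ≤ _ := by
        rw [Finset.sum_add_distrib, Finset.sum_add_distrib]
        gcongr
        · exact h1 _ p.1 X X'
        · exact h1 _ p.2 Y Y'

lemma LMBM_meas {d N : ℕ} {α : Type*} [MeasurableSpace α]
    (X Y : α → Fin N → EuclideanSpace ℝ (Fin d)) (hX : ∀ i, Measurable fun a => X a i)
    (hY : ∀ i, Measurable fun a => Y a i) : Measurable fun a => LMBM (X a) (Y a) := by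
  simp_rw [LMBM_eq]
  refine Measurable.iInf fun p => ?_
  exact Finset.measurable_sum _ fun i _ => (hX _).dist (hY _)

lemma unitCube_meas (d : ℕ) : MeasurableSet (unitCube d) := by
  have : unitCube d = ⋂ i, (fun x : EuclideanSpace ℝ (Fin d) => x i) ⁻¹' Set.Icc (0 : ℝ) 1 := by
    ext x; simp [unitCube]
  rw [this]
  refine MeasurableSet.iInter fun i => ?_
  have : Measurable (fun x : EuclideanSpace ℝ (Fin d) => x i) := by fun_prop
  exact this measurableSet_Icc

lemma unitCube_dist {d : ℕ} {x y : EuclideanSpace ℝ (Fin d)} (hx : x ∈ unitCube d)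
    (hy : y ∈ unitCube d) : dist x y ≤ Real.sqrt d := by
  rw [EuclideanSpace.dist_eq]
  apply Real.sqrt_le_sqrt
  calc ∑ i, dist (x i) (y i) ^ 2 ≤ ∑ i : Fin d, (1 : ℝ) := by
        refine Finset.sum_le_sum fun i _ => ?_
        have h := Real.dist_le_of_mem_Icc (hx i) (hy i)
        have h0 : 0 ≤ dist (x i) (y i) := dist_nonneg
        nlinarith
    _ = d := by simp

open Classical in
noncomputable def cubeClamp (d : ℕ) (x : EuclideanSpace ℝ (Fin d)) : EuclideanSpace ℝ (Fin d) :=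
  if x ∈ unitCube d then x else 0

lemma cubeClamp_mem (d : ℕ) (x : EuclideanSpace ℝ (Fin d)) : cubeClamp d x ∈ unitCube d := by
  unfold cubeClamp
  split_ifs with h
  · exact h
  · simp [unitCube]

lemma cubeClamp_meas (d : ℕ) : Measurable (cubeClamp d) := by
  unfold cubeClamp
  exact Measurable.ite (unitCube_meas d) measurable_id measurable_const

noncomputable def clampF (d N : ℕ) (Z : Fin (N + N) → EuclideanSpace ℝ (Fin d)) : ℝ :=
  LMBM (fun i => cubeClamp d (Z (Fin.castAdd N i))) (fun i => cubeClamp d (Z (Fin.natAdd N i)))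

lemma clampF_meas (d N : ℕ) : Measurable (clampF d N) :=
  LMBM_meas _ _ (fun _ => (cubeClamp_meas d).comp (measurable_pi_apply _))
    (fun _ => (cubeClamp_meas d).comp (measurable_pi_apply _))

lemma clampF_lip (d N : ℕ) (Z Z' : Fin (N + N) → EuclideanSpace ℝ (Fin d)) :
    clampF d N Z ≤ clampF d N Z' + ∑ k, dist (cubeClamp d (Z k)) (cubeClamp d (Z' k)) := by
  rw [Fin.sum_univ_add]
  exact LMBM_lip _ _ _ _

lemma clampF_bd (d N : ℕ) (k : Fin (N + N)) (Z Z' : Fin (N + N) → EuclideanSpace ℝ (Fin d))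
    (h : ∀ j, j ≠ k → Z j = Z' j) : clampF d N Z ≤ clampF d N Z' + Real.sqrt d := by
  refine (clampF_lip d N Z Z').trans ?_
  gcongr
  rw [Finset.sum_eq_single k (fun j _ hj => by rw [h j hj, dist_self]) (by simp)]
  exact unitCube_dist (cubeClamp_mem _ _) (cubeClamp_mem _ _)

lemma clampF_bounded (d N : ℕ) : ∃ B, ∀ Z, |clampF d N Z| ≤ B := by
  refine ⟨|clampF d N 0| + ∑ k : Fin (N + N), Real.sqrt d, fun Z => ?_⟩
  have h : ∀ Z Z', clampF d N Z ≤ clampF d N Z' + ∑ k : Fin (N + N), Real.sqrt d := fun Z Z' => by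
    refine (clampF_lip d N Z Z').trans ?_
    gcongr
    exact unitCube_dist (cubeClamp_mem _ _) (cubeClamp_mem _ _)
  have h1 := h Z 0
  have h2 := h 0 Z
  rw [abs_le]
  constructor
  · linarith [neg_abs_le (clampF d N 0)]
  · linarith [le_abs_self (clampF d N 0)]

theorem concentration_MBM
    (d N : ℕ) (hd : 1 ≤ d) (hN : 1 ≤ N)
    (Ω : Type*) [MeasureSpace Ω] [IsProbabilityMeasure (ℙ : Measure Ω)]
    (X Y : Fin N → Ω → EuclideanSpace ℝ (Fin d))
    (hmeas : ∀ n, Measurable (Sum.elim X Y n))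
    (hindep : iIndepFun (Sum.elim X Y) ℙ)
    (hunif : ∀ n, Measure.map (Sum.elim X Y n) ℙ = unifCube d)
    (t : ℝ) (ht : 0 < t) :
    ℙ {ω | |LMBM (fun i => X i ω) (fun j => Y j ω) / (N : ℝ) ^ (1 - 1 / (d : ℝ)) -
            ∫ ω', LMBM (fun i => X i ω') (fun j => Y j ω') / (N : ℝ) ^ (1 - 1 / (d : ℝ)) ∂ℙ| > t}
      ≤ ENNReal.ofReal
          (2 * Real.exp (-((N : ℝ) ^ (1 - 2 / (d : ℝ)) * t ^ 2) / (8 * d))) := by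
  have hprob : IsProbabilityMeasure (unifCube d) := by
    rw [← hunif (Sum.inl ⟨0, hN⟩)]
    exact Measure.isProbabilityMeasure_map (hmeas _).aemeasurable
  set W : Ω → Fin (N + N) → EuclideanSpace ℝ (Fin d) :=
    fun ω k => Sum.elim X Y (finSumFinEquiv.symm k) ω with hW
  have hWm : Measurable W := measurable_pi_iff.2 fun k => hmeas _
  have hWmap : Measure.map W ℙ = Measure.pi fun _ : Fin (N + N) => unifCube d := by
    have h := (hindep.precomp (g := (finSumFinEquiv (m := N) (n := N)).symm)
      finSumFinEquiv.symm.injective)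
    have h2 := (iIndepFun_iff_map_fun_eq_pi_map (fun k => (hmeas _).aemeasurable)).1 h
    simp_rw [hunif] at h2
    exact h2
  have hmem : ∀ᵐ ω ∂(ℙ : Measure Ω), ∀ n, Sum.elim X Y n ω ∈ unitCube d := by
    rw [ae_all_iff]
    intro n
    refine ae_of_ae_map (hmeas n).aemeasurable ?_
    rw [hunif n]
    exact ae_restrict_mem (unitCube_meas d)
  have hae : ∀ᵐ ω ∂(ℙ : Measure Ω),
      clampF d N (W ω) = LMBM (fun i => X i ω) (fun j => Y j ω) := by
    filter_upwards [hmem] with ω hω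
    unfold clampF
    congr 1
    · funext i
      have := hω (Sum.inl i)
      simp only [Sum.elim_inl] at this
      simp [hW, cubeClamp, this]
    · funext i
      have := hω (Sum.inr i)
      simp only [Sum.elim_inr] at this
      have e : W ω (Fin.natAdd N i) = Y i ω := by
        simp only [hW, finSumFinEquiv_symm_apply_natAdd, Sum.elim_inr]
      rw [e, cubeClamp, if_pos this]
  obtain ⟨B, hB⟩ := clampF_bounded d N
  have hFm := clampF_meas d N
  set M := ∫ y, clampF d N y ∂(Measure.pi fun _ : Fin (N + N) => unifCube d) with hM
  have hMΩ : ∫ ω', LMBM (fun i => X i ω') (fun j => Y j ω') ∂ℙ = M := by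
    rw [hM, ← hWmap, integral_map hWm.aemeasurable hFm.aestronglyMeasurable]
    exact integral_congr_ae (hae.mono fun ω h => h.symm)
  have hsub : HasSubgaussianMGF (fun Z => clampF d N Z - M) (((N + N : ℕ) : NNReal) * d)
      (Measure.pi fun _ : Fin (N + N) => unifCube d) := by
    refine ⟨fun s => ?_, fun s => ?_⟩
    · refine integrable_exp_mul_of_mem_Icc (a := -B - M) (b := B - M)
        (hFm.sub_const M).aemeasurable (ae_of_all _ fun Z => ?_)
      have := abs_le.1 (hB Z)
      constructor <;> linarith
    · have := mcd_aux (unifCube d) (Real.sqrt d) B (N + N) (clampF d N) hFm hB (clampF_bd d N) s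
      rw [Real.sq_sqrt (by positivity)] at this
      simpa [mgf] using this
  rw [← hWmap] at hsub
  have hsubΩ : HasSubgaussianMGF (fun ω => clampF d N (W ω) - M) (((N + N : ℕ) : NNReal) * d) ℙ :=
    HasSubgaussianMGF.of_map hWm.aemeasurable hsub
  have hNpos : (0 : ℝ) < N := by exact_mod_cast hN
  have hdpos : (0 : ℝ) < d := by exact_mod_cast hd
  set R := (N : ℝ) ^ (1 - 1 / (d : ℝ)) with hR
  have hRpos : 0 < R := Real.rpow_pos_of_pos hNpos _
  have hu : 0 ≤ t * R := by positivity
  have h1 := hsubΩ.measure_ge_le hu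
  have h2 := hsubΩ.neg.measure_ge_le hu
  have hR2 : R ^ 2 = N * (N : ℝ) ^ (1 - 2 / (d : ℝ)) := by
    rw [hR, ← Real.rpow_natCast, ← Real.rpow_mul hNpos.le]
    nth_rewrite 2 [← Real.rpow_one (N : ℝ)]
    rw [← Real.rpow_add hNpos]
    congr 1
    push_cast
    ring
  have hexp : Real.exp (-(t * R) ^ 2 / (2 * ((((N + N : ℕ) : NNReal) * d : NNReal) : ℝ)))
      ≤ Real.exp (-((N : ℝ) ^ (1 - 2 / (d : ℝ)) * t ^ 2) / (8 * d)) := by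
    apply Real.exp_le_exp.2
    push_cast
    rw [mul_pow, hR2]
    have hp : 0 < (N : ℝ) ^ (1 - 2 / (d : ℝ)) := Real.rpow_pos_of_pos hNpos _
    set P := (N : ℝ) ^ (1 - 2 / (d : ℝ))
    have e1 : -(t ^ 2 * (N * P)) / (2 * ((N + N) * d)) = -(P * t ^ 2 / (4 * d)) := by
      field_simp; ring
    have e2 : -(P * t ^ 2) / (8 * d) = -(P * t ^ 2 / (8 * d)) := by ring
    rw [e1, e2, neg_le_neg_iff]
    gcongr
    norm_num
  rw [integral_div, hMΩ]
  have hle : (ℙ : Measure Ω) {ω | |LMBM (fun i => X i ω) (fun j => Y j ω) / R - M / R| > t}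
      ≤ ℙ ({ω | t * R ≤ clampF d N (W ω) - M} ∪
        {ω | t * R ≤ (-fun ω => clampF d N (W ω) - M) ω}) := by
    refine measure_mono_ae ?_
    filter_upwards [hae] with ω hω hlt
    change |LMBM (fun i => X i ω) (fun j => Y j ω) / R - M / R| > t at hlt
    rw [← hω, ← sub_div, abs_div, abs_of_pos hRpos, gt_iff_lt, lt_div_iff₀ hRpos] at hlt
    rcases le_abs.1 hlt.le with h | h
    · exact Or.inl h
    · exact Or.inr h
  refine hle.trans ((measure_union_le _ _).trans ?_)
  rw [two_mul, ENNReal.ofReal_add (Real.exp_pos _).le (Real.exp_pos _).le]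
  refine add_le_add ?_ ?_
  · rw [← ofReal_measureReal]
    exact ENNReal.ofReal_le_ofReal (h1.trans hexp)
  · rw [← ofReal_measureReal]
    exact ENNReal.ofReal_le_ofReal (h2.trans hexp)
end

section
/- Let Q ⊂ ℝ^d be a cube with edge length a, and let X₁,…,X_{N₁} and Y₁,…,Y_{N₂} be points of Q. Divide Q into 2^d disjoint congruent subcubes Q_p (p = 1,…,2^d) of edge length a/2. For each p, let n_{1,p} and n_{2,p} be the numbers of X-points and Y-points lying in Q_p, and let L_p be the length of an optimal partial bipartite matching of the X-points and Y-points in Q_p (matching min(n_{1,p}, n_{2,p}) pairs). Then L_MBM(X₁,…,X_{N₁}; Y₁,…,Y_{N₂}) ≤ Σ_{p=1}^{2^d} L_p + (a√d / 2) Σ_{p=1}^{2^d} |n_{1,p} − n_{2,p}|. -/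
open MeasureTheory ProbabilityTheory Filter

theorem LMBMon_attained {d N₁ N₂ : ℕ} (X : Fin N₁ → EuclideanSpace ℝ (Fin d))
    (Y : Fin N₂ → EuclideanSpace ℝ (Fin d)) (A : Finset (Fin N₁)) (B : Finset (Fin N₂)) :
    ∃ (σ : Fin (min A.card B.card) ↪ Fin N₁) (τ : Fin (min A.card B.card) ↪ Fin N₂),
    (∀ i, σ i ∈ A) ∧ (∀ i, τ i ∈ B) ∧ LMBMon X Y A B = ∑ i, dist (X (σ i)) (Y (τ i)) := by
  unfold LMBMon
  have hne : { s | ∃ (σ : Fin (min A.card B.card) ↪ Fin N₁)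
      (τ : Fin (min A.card B.card) ↪ Fin N₂),
      (∀ i, σ i ∈ A) ∧ (∀ i, τ i ∈ B) ∧ s = ∑ i, dist (X (σ i)) (Y (τ i)) }.Nonempty := by
    refine ⟨_, (Fin.castLEEmb (min_le_left _ _)).trans
        (A.equivFin.symm.toEmbedding.trans (Function.Embedding.subtype _)),
      (Fin.castLEEmb (min_le_right _ _)).trans
        (B.equivFin.symm.toEmbedding.trans (Function.Embedding.subtype _)), ?_, ?_, rfl⟩
    · intro i; simp
    · intro i; simp
  have hfin : { s | ∃ (σ : Fin (min A.card B.card) ↪ Fin N₁)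
      (τ : Fin (min A.card B.card) ↪ Fin N₂),
      (∀ i, σ i ∈ A) ∧ (∀ i, τ i ∈ B) ∧ s = ∑ i, dist (X (σ i)) (Y (τ i)) }.Finite := by
    refine (Set.finite_range (fun q : (Fin (min A.card B.card) ↪ Fin N₁) ×
      (Fin (min A.card B.card) ↪ Fin N₂) => ∑ i, dist (X (q.1 i)) (Y (q.2 i)))).subset ?_
    rintro s ⟨σ, τ, _, _, rfl⟩
    exact ⟨(σ, τ), rfl⟩
  exact hne.csInf_mem hfin

theorem LMBM_le_extend {d N₁ N₂ : ℕ} (X : Fin N₁ → EuclideanSpace ℝ (Fin d))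
    (Y : Fin N₂ → EuclideanSpace ℝ (Fin d)) (D : ℝ) (hD : ∀ i j, dist (X i) (Y j) ≤ D) (k : ℕ) :
    ∀ (ι : Type) [Fintype ι] (σ : ι ↪ Fin N₁) (τ : ι ↪ Fin N₂),
      Fintype.card ι + k = min N₁ N₂ →
      LMBM X Y ≤ ∑ i, dist (X (σ i)) (Y (τ i)) + k * D := by
  induction k with
  | zero =>
    intro ι _ σ τ h
    have hc : Fintype.card (Fin (min (Finset.univ : Finset (Fin N₁)).card
        (Finset.univ : Finset (Fin N₂)).card)) = Fintype.card ι := by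
      simp; omega
    let e := Fintype.equivOfCardEq hc
    unfold LMBM LMBMon
    refine csInf_le ⟨0, ?_⟩ ⟨e.toEmbedding.trans σ, e.toEmbedding.trans τ, by simp, by simp, ?_⟩
    · rintro s ⟨σ, τ, _, _, rfl⟩
      exact Finset.sum_nonneg fun _ _ => dist_nonneg
    · simp only [Nat.cast_zero, zero_mul, add_zero]
      exact (e.sum_comp fun i => dist (X (σ i)) (Y (τ i))).symm
  | succ k ih =>
    intro ι _ σ τ h
    have h1 : ∃ x, x ∉ Set.range σ := by
      by_contra! hh
      have := Fintype.card_le_of_surjective σ hh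
      simp at this; omega
    have h2 : ∃ x, x ∉ Set.range τ := by
      by_contra! hh
      have := Fintype.card_le_of_surjective τ hh
      simp at this; omega
    obtain ⟨x, hx⟩ := h1
    obtain ⟨y, hy⟩ := h2
    have := ih (Option ι) (σ.optionElim x hx) (τ.optionElim y hy) (by simp; omega)
    rw [Fintype.sum_option] at this
    simp at this
    have := hD x y
    push_cast
    linarith

theorem LMBM_partition {d N₁ N₂ : ℕ} (X : Fin N₁ → EuclideanSpace ℝ (Fin d))
    (Y : Fin N₂ → EuclideanSpace ℝ (Fin d)) (D : ℝ) (hD0 : 0 ≤ D)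
    (hD : ∀ i j, dist (X i) (Y j) ≤ D)
    {P : Type} [Fintype P] [DecidableEq P] (f : Fin N₁ → P) (g : Fin N₂ → P)
    (A : P → Finset (Fin N₁)) (B : P → Finset (Fin N₂))
    (hA : ∀ p j, j ∈ A p ↔ f j = p) (hB : ∀ p j, j ∈ B p ↔ g j = p) :
    LMBM X Y ≤ ∑ p, LMBMon X Y (A p) (B p) +
      D / 2 * ∑ p, |((A p).card : ℝ) - ((B p).card : ℝ)| := by
  choose σ τ hσ hτ hL using fun p => LMBMon_attained X Y (A p) (B p)
  have cA : N₁ = ∑ p, (A p).card := by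
    have := Finset.card_eq_sum_card_fiberwise (f := f) (s := Finset.univ) (t := Finset.univ)
      (by intro x; simp)
    simp only [Finset.card_univ, Fintype.card_fin] at this
    refine this.trans ?_
    refine Finset.sum_congr rfl fun p _ => congrArg _ ?_
    ext j; simp [hA]
  have cB : N₂ = ∑ p, (B p).card := by
    have := Finset.card_eq_sum_card_fiberwise (f := g) (s := Finset.univ) (t := Finset.univ)
      (by intro x; simp)
    simp only [Finset.card_univ, Fintype.card_fin] at this
    refine this.trans ?_
    refine Finset.sum_congr rfl fun p _ => congrArg _ ?_
    ext j; simp [hB]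
  let S : (Σ p, Fin (min (A p).card (B p).card)) ↪ Fin N₁ := ⟨fun q => σ q.1 q.2, by
    rintro ⟨p, i⟩ ⟨q, j⟩ h
    have h1 := (hA _ _).1 (hσ p i)
    have h2 := (hA _ _).1 (hσ q j)
    simp only at h
    rw [h, h2] at h1
    subst h1
    rw [(σ q).injective h]⟩
  let T : (Σ p, Fin (min (A p).card (B p).card)) ↪ Fin N₂ := ⟨fun q => τ q.1 q.2, by
    rintro ⟨p, i⟩ ⟨q, j⟩ h
    have h1 := (hB _ _).1 (hτ p i)
    have h2 := (hB _ _).1 (hτ q j)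
    simp only at h
    rw [h, h2] at h1
    subst h1
    rw [(τ q).injective h]⟩
  have hK : Fintype.card (Σ p, Fin (min (A p).card (B p).card)) ≤ min N₁ N₂ := by
    refine le_min ?_ ?_
    · simpa using Fintype.card_le_of_embedding S
    · simpa using Fintype.card_le_of_embedding T
  obtain ⟨k, hk⟩ := Nat.exists_eq_add_of_le hK
  have main := LMBM_le_extend X Y D hD k _ S T hk.symm
  rw [Fintype.sum_sigma] at main
  have e1 : ∑ p, ∑ i, dist (X (S ⟨p, i⟩)) (Y (T ⟨p, i⟩)) = ∑ p, LMBMon X Y (A p) (B p) :=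
    Finset.sum_congr rfl fun p _ => (hL p).symm
  rw [e1] at main
  have e2 : ∑ p, |((A p).card : ℝ) - ((B p).card : ℝ)|
      = (N₁ : ℝ) + N₂ - 2 * ∑ p, ((min (A p).card (B p).card : ℕ) : ℝ) := by
    have cA' : (N₁ : ℝ) = ∑ p, ((A p).card : ℝ) := by exact_mod_cast cA
    have cB' : (N₂ : ℝ) = ∑ p, ((B p).card : ℝ) := by exact_mod_cast cB
    rw [cA', cB', Finset.mul_sum, ← Finset.sum_add_distrib, ← Finset.sum_sub_distrib]
    refine Finset.sum_congr rfl fun p _ => ?_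
    push_cast
    rcases le_total ((A p).card : ℝ) ((B p).card : ℝ) with h | h
    · rw [min_eq_left h, abs_of_nonpos (by linarith)]; ring
    · rw [min_eq_right h, abs_of_nonneg (by linarith)]; ring
  have e3 : (2 * k : ℝ) ≤ ∑ p, |((A p).card : ℝ) - ((B p).card : ℝ)| := by
    rw [e2]
    have h2 : 2 * k + 2 * ∑ p, min (A p).card (B p).card ≤ N₁ + N₂ := by
      simp only [Fintype.card_sigma, Fintype.card_fin] at hk
      omega
    have h3 : (2 * k + 2 * ∑ p, ((min (A p).card (B p).card : ℕ) : ℝ) : ℝ) ≤ N₁ + N₂ := by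
      exact_mod_cast h2
    linarith
  nlinarith

theorem cube_dist_le {d : ℕ} (a : ℝ) (ha : 0 < a) (c : Fin d → ℝ)
    (x y : EuclideanSpace ℝ (Fin d)) (hx : ∀ i, x i ∈ Set.Icc (c i) (c i + a))
    (hy : ∀ i, y i ∈ Set.Icc (c i) (c i + a)) : dist x y ≤ a * Real.sqrt d := by
  rw [EuclideanSpace.dist_eq]
  have : a * Real.sqrt d = Real.sqrt (∑ _i : Fin d, a ^ 2) := by
    simp [mul_comm, Real.sqrt_sq ha.le]
  rw [this]
  refine Real.sqrt_le_sqrt (Finset.sum_le_sum fun i _ => ?_)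
  have := hx i
  have := hy i
  simp only [Set.mem_Icc] at *
  refine pow_le_pow_left₀ dist_nonneg ?_ 2
  rw [Real.dist_eq, abs_le]
  constructor <;> linarith

open scoped Classical in
theorem cell_iff {d : ℕ} (a : ℝ) (c : Fin d → ℝ)
    (x : EuclideanSpace ℝ (Fin d)) (hx : ∀ i, x i ∈ Set.Icc (c i) (c i + a)) (p : Fin d → Bool) :
    (∀ i, if p i then x i ∈ Set.Icc (c i + a / 2) (c i + a)
            else x i ∈ Set.Ico (c i) (c i + a / 2)) ↔
    (fun i => decide (c i + a / 2 ≤ x i)) = p := by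
  rw [funext_iff]
  refine forall_congr' fun i => ?_
  have := hx i
  simp only [Set.mem_Icc, Set.mem_Ico] at *
  cases h : p i
  · simp [this.1]
  · simp [this.2]

open scoped Classical in
/-- Subadditivity of the minimum bipartite matching length under division of a cube `Q`
(with lower corner `c` and edge length `a`) into `2^d` congruent subcubes of edge `a/2`.
The subcube with label `p : Fin d → Bool` consists of those points of `Q` lying, in each
coordinate `i`, in the upper half if `p i` and in the (half-open) lower half otherwise. -/
theorem MBM_subadditive_halving
    (d N₁ N₂ : ℕ) (hd : 1 ≤ d) (a : ℝ) (ha : 0 < a) (c : Fin d → ℝ)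
    (X : Fin N₁ → EuclideanSpace ℝ (Fin d)) (Y : Fin N₂ → EuclideanSpace ℝ (Fin d))
    (hX : ∀ j, ∀ i, X j i ∈ Set.Icc (c i) (c i + a))
    (hY : ∀ j, ∀ i, Y j i ∈ Set.Icc (c i) (c i + a)) :
    LMBM X Y ≤
      (∑ p : Fin d → Bool,
        LMBMon X Y
          (Finset.univ.filter fun j => ∀ i, if p i
            then X j i ∈ Set.Icc (c i + a / 2) (c i + a)
            else X j i ∈ Set.Ico (c i) (c i + a / 2))
          (Finset.univ.filter fun j => ∀ i, if p i
            then Y j i ∈ Set.Icc (c i + a / 2) (c i + a)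
            else Y j i ∈ Set.Ico (c i) (c i + a / 2))) +
      a * Real.sqrt d / 2 *
        ∑ p : Fin d → Bool,
          |((Finset.univ.filter fun j => ∀ i, if p i
              then X j i ∈ Set.Icc (c i + a / 2) (c i + a)
              else X j i ∈ Set.Ico (c i) (c i + a / 2)).card : ℝ) -
           ((Finset.univ.filter fun j => ∀ i, if p i
              then Y j i ∈ Set.Icc (c i + a / 2) (c i + a)
              else Y j i ∈ Set.Ico (c i) (c i + a / 2)).card : ℝ)| := by
  have h := LMBM_partition X Y (a * Real.sqrt d) (by positivity)
    (fun i j => cube_dist_le a ha c _ _ (hX i) (hY j))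
    (fun j i => decide (c i + a / 2 ≤ X j i)) (fun j i => decide (c i + a / 2 ≤ Y j i))
    (fun p => Finset.univ.filter fun j => ∀ i, if p i
            then X j i ∈ Set.Icc (c i + a / 2) (c i + a)
            else X j i ∈ Set.Ico (c i) (c i + a / 2))
    (fun p => Finset.univ.filter fun j => ∀ i, if p i
            then Y j i ∈ Set.Icc (c i + a / 2) (c i + a)
            else Y j i ∈ Set.Ico (c i) (c i + a / 2))
    (fun p j => by
      rw [Finset.mem_filter_univ]
      exact cell_iff a c _ (hX j) p)
    (fun p j => by
      rw [Finset.mem_filter_univ]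
      exact cell_iff a c _ (hY j) p)
  exact h
end
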